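/- arXiv:1912.11681 — 4 statements merged into one kernel-verified Lean document; each statement's English description precedes it below -/
import Mathlib

section
/- Let p ≥ q ≥ 2 be integers, n = p + q, and let λ₁,…,λ_p ∈ ℂ be pairwise distinct, μ₁,…,μ_q ∈ ℂ be pairwise distinct, with at most one element of {λ₁,…,λ_p,μ₁,…,μ_q} equal to 0. Let f = ∏_{i=1}^p (x₀ − λᵢx₁) · ∏_{j=1}^q (x₀ − μⱼx₂) ∈ ℂ[x₀,x₁,x₂] and F = {x ∈ ℂ³ : f(x) = 1}. Then the first singular homology group H₁(F; ℂ) is a ℂ-vector space of dimension n − 1. -/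
open CategoryTheory AlgebraicTopology

/-- First singular homology with complex coefficients, as a functor
`TopCat ⥤ ModuleCat ℂ`: the singular simplicial set, followed by the free
`ℂ`-module functor, the alternating face map (singular chain) complex, and
homology in degree `1`. -/
noncomputable def H1 : TopCat ⥤ ModuleCat ℂ :=
  TopCat.toSSet ⋙ ((SimplicialObject.whiskering _ _).obj (ModuleCat.free ℂ)) ⋙
    alternatingFaceMapComplex (ModuleCat ℂ) ⋙
    HomologicalComplex.homologyFunctor (ModuleCat ℂ) (ComplexShape.down ℕ) 1

/-- The Milnor fibre `F = {x ∈ ℂ³ : f(x) = 1}` of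
`f = ∏ᵢ (x₀ − λᵢ x₁) · ∏ⱼ (x₀ − μⱼ x₂)`. -/
abbrev MilnorFibre (p q : ℕ) (lam : Fin p → ℂ) (mu : Fin q → ℂ) : Type :=
  {v : Fin 3 → ℂ // (∏ i, (v 0 - lam i * v 1)) * (∏ j, (v 0 - mu j * v 2)) = 1}

open unitInterval

/-- Cubical 1-cocycles on `X` with complex values. -/
structure IsCocycle {X : Type} [TopologicalSpace X] (φ : C(I, X) → ℂ) : Prop where
  const : ∀ x, φ (ContinuousMap.const I x) = 0
  square : ∀ s : C(I × I, X),
    φ ⟨fun t => s (t, 0), by fun_prop⟩ + φ ⟨fun t => s (1, t), by fun_prop⟩ =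
    φ ⟨fun t => s (0, t), by fun_prop⟩ + φ ⟨fun t => s (t, 1), by fun_prop⟩

namespace IsCocycle

variable {X Y : Type} [TopologicalSpace X] [TopologicalSpace Y]

theorem const' {φ : C(I, X) → ℂ} (h : IsCocycle φ) (γ : C(I, X)) (x : X) (hγ : ∀ t, γ t = x) :
    φ γ = 0 := by
  rw [← h.const x]; congr 1; ext t; exact hγ t

/-- flexible form of the square relation -/
theorem sq {φ : C(I, X) → ℂ} (h : IsCocycle φ) (s : I × I → X) (hs : Continuous s)
    (b r l u : C(I, X)) (hb : ∀ t, b t = s (t, 0)) (hr : ∀ t, r t = s (1, t))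
    (hl : ∀ t, l t = s (0, t)) (hu : ∀ t, u t = s (t, 1)) :
    φ b + φ r = φ l + φ u := by
  have := h.square ⟨s, hs⟩
  convert this using 3 <;> ext t <;> simp [*]

theorem comp {φ : C(I, Y) → ℂ} (h : IsCocycle φ) (f : C(X, Y)) :
    IsCocycle (fun γ => φ (f.comp γ)) where
  const x := h.const' _ (f x) (fun t => rfl)
  square s := h.sq (f ∘ s) (by fun_prop) _ _ _ _ (fun t => rfl) (fun t => rfl) (fun t => rfl)
    (fun t => rfl)

theorem add {φ ψ : C(I, X) → ℂ} (h : IsCocycle φ) (h' : IsCocycle ψ) :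
    IsCocycle (fun γ => φ γ + ψ γ) where
  const x := by simp [h.const, h'.const]
  square s := by linear_combination h.square s + h'.square s

theorem smul {φ : C(I, X) → ℂ} (h : IsCocycle φ) (c : ℂ) :
    IsCocycle (fun γ => c * φ γ) where
  const x := by simp [h.const]
  square s := by linear_combination c * h.square s

theorem sub {φ ψ : C(I, X) → ℂ} (h : IsCocycle φ) (h' : IsCocycle ψ) :
    IsCocycle (fun γ => φ γ - ψ γ) where
  const x := by simp [h.const, h'.const]
  square s := by linear_combination h.square s - h'.square s

theorem sum {ι : Type*} (S : Finset ι) {φ : ι → C(I, X) → ℂ} (h : ∀ i ∈ S, IsCocycle (φ i)) :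
    IsCocycle (fun γ => ∑ i ∈ S, φ i γ) where
  const x := Finset.sum_eq_zero fun i hi => (h i hi).const x
  square s := by
    rw [← Finset.sum_add_distrib, ← Finset.sum_add_distrib]
    exact Finset.sum_congr rfl fun i hi => (h i hi).square s

/-- additivity: three paths which are all restrictions of `G : ℝ → X`. -/
theorem seg {φ : C(I, X) → ℂ} (h : IsCocycle φ) (G : ℝ → X) (hG : Continuous G) (a b c : ℝ)
    (p q r : C(I, X)) (hp : ∀ t : I, p t = G (a + t * (b - a)))
    (hq : ∀ t : I, q t = G (b + t * (c - b))) (hr : ∀ t : I, r t = G (a + t * (c - a))) :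
    φ p + φ q = φ r := by
  have := h.sq (fun z : I × I => G ((1 - z.1) * a + z.1 * ((1 - z.2) * b + z.2 * c)))
    (by fun_prop) p q (ContinuousMap.const I (G a)) r
    (by intro t; rw [hp]; congr 1; simp; ring)
    (by intro t; rw [hq]; congr 1; simp; ring)
    (by intro t; simp)
    (by intro t; rw [hr]; congr 1; simp; ring)
  rw [this, h.const, zero_add]

theorem trans {φ : C(I, X) → ℂ} (h : IsCocycle φ) {x y z : X} (γ : Path x y) (γ' : Path y z) :
    φ (γ.trans γ').toContinuousMap = φ γ.toContinuousMap + φ γ'.toContinuousMap := by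
  refine (h.seg (γ.trans γ').extend (γ.trans γ').continuous_extend 0 (1/2) 1 _ _ _ ?_ ?_ ?_).symm
  · intro t
    have ht := t.2
    rw [Path.extend_apply _ ⟨by linarith [ht.1], by linarith [ht.2]⟩, Path.trans_apply]
    rw [dif_pos (by simp; linarith [ht.2])]
    simp only [Path.coe_toContinuousMap]
    congr 1; ext; simp; ring
  · intro t
    have ht := t.2
    rw [Path.extend_apply _ ⟨by linarith [ht.1], by linarith [ht.2]⟩, Path.trans_apply]
    by_cases h0 : (t : ℝ) = 0
    · have : t = 0 := by ext; exact h0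
      subst this
      rw [dif_pos (by simp)]
      simp
    · have : (0:ℝ) < t := lt_of_le_of_ne ht.1 (Ne.symm h0)
      rw [dif_neg (by simp; linarith)]
      simp only [Path.coe_toContinuousMap]
      congr 1; ext; simp; ring
  · intro t
    simp

theorem symm {φ : C(I, X) → ℂ} (h : IsCocycle φ) {x y : X} (γ : Path x y) :
    φ γ.symm.toContinuousMap = - φ γ.toContinuousMap := by
  have := h.seg γ.extend γ.continuous_extend 0 1 0 γ.toContinuousMap γ.symm.toContinuousMap
    (ContinuousMap.const I x) (by intro t; simp)
    (by
      intro t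
      have ht := t.2
      rw [Path.extend_apply _ ⟨by linarith [ht.2], by linarith [ht.1]⟩]
      simp only [Path.coe_toContinuousMap, Path.symm_apply]
      refine congrArg γ (Subtype.ext ?_)
      simp; ring)
    (by intro t; simp)
  rw [h.const] at this
  linear_combination this

/-- a cocycle vanishing on loops is exact; relative version for paths inside a set `W`. -/
theorem exists_primitive_on {φ : C(I, X) → ℂ} (h : IsCocycle φ) (W : Set X)
    (hl : ∀ γ : C(I, X), (∀ t, γ t ∈ W) → γ 0 = γ 1 → φ γ = 0) :
    ∃ f : X → ℂ, ∀ γ : C(I, X), (∀ t, γ t ∈ W) → φ γ = f (γ 1) - f (γ 0) := by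
  classical
  let rep : W → W := fun x => Quotient.out (Quotient.mk (pathSetoid W) x)
  have hrep : ∀ x, Joined (rep x) x := fun x =>
    Quotient.exact (s := pathSetoid W) (Quotient.out_eq _)
  have hrep' : ∀ x y, Joined x y → rep x = rep y := fun x y hxy => by
    simp only [rep]; rw [Quotient.sound (s := pathSetoid W) hxy]
  let inc : C(W, X) := ⟨Subtype.val, by fun_prop⟩
  have h2 := h.comp inc
  let f0 : W → ℂ := fun x => φ (inc.comp (hrep x).somePath.toContinuousMap)
  refine ⟨fun x => if hx : x ∈ W then f0 ⟨x, hx⟩ else 0, fun γ hγ => ?_⟩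
  simp only [hγ, dif_pos]
  let γ' : Path (⟨γ 0, hγ 0⟩ : W) ⟨γ 1, hγ 1⟩ :=
    { toFun := fun t => ⟨γ t, hγ t⟩, continuous_toFun := by fun_prop, source' := rfl, target' := rfl }
  have e1 := hrep' _ _ ⟨γ'⟩
  have : ∀ (a b : W) (x y : W) (e : a = b) (p : Path a x) (q : Path b y) (g : Path x y),
      φ (inc.comp g.toContinuousMap) = φ (inc.comp q.toContinuousMap) -
        φ (inc.comp p.toContinuousMap) := by
    intro a b x y e p q g
    subst e
    have := h2.trans (p.trans g) q.symm
    rw [h2.trans p g, h2.symm q, hl _ (fun t => Subtype.coe_prop _) (by simp)] at this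
    linear_combination -this
  have := this _ _ _ _ e1 (hrep _).somePath (hrep _).somePath γ'
  exact this

theorem exists_primitive {φ : C(I, X) → ℂ} (h : IsCocycle φ)
    (hl : ∀ γ : C(I, X), γ 0 = γ 1 → φ γ = 0) :
    ∃ f : X → ℂ, ∀ γ : C(I, X), φ γ = f (γ 1) - f (γ 0) := by
  obtain ⟨f, hf⟩ := h.exists_primitive_on Set.univ (fun γ _ => hl γ)
  exact ⟨f, fun γ => hf γ (fun _ => trivial)⟩

/-- local primitives which agree give a global primitive -/
theorem glue {φ : C(I, X) → ℂ} (h : IsCocycle φ) {ι : Type} (U : ι → Set X)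
    (hU : ∀ i, IsOpen (U i)) (hc : ∀ x, ∃ i, x ∈ U i) (f : X → ℂ)
    (hf : ∀ i (γ : C(I, X)), (∀ t, γ t ∈ U i) → φ γ = f (γ 1) - f (γ 0)) (γ : C(I, X)) :
    φ γ = f (γ 1) - f (γ 0) := by
  obtain ⟨t, t0, tm, ⟨N, hN⟩, ht⟩ := exists_monotone_Icc_subset_open_cover_unitInterval
    (c := fun i => γ ⁻¹' (U i)) (fun i => (hU i).preimage γ.continuous)
    (fun x _ => by simpa using hc (γ x))
  let G : ℝ → X := fun x => γ (Set.projIcc 0 1 zero_le_one x)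
  have hG : Continuous G := by fun_prop
  have hGI : ∀ x : I, G x = γ x := fun x => by simp [G]
  let P : ℝ → ℝ → C(I, X) := fun a b => ⟨fun x => G (a + x * (b - a)), by fun_prop⟩
  have key : ∀ m : ℕ, φ (P 0 (t m)) = f (γ (t m)) - f (γ 0) := by
    intro m
    induction m with
    | zero =>
      rw [t0]; simp only [sub_self]
      refine h.const' _ (γ 0) (fun x => ?_)
      have := hGI 0
      simpa [P] using this
    | succ m ih =>
      rw [← h.seg G hG 0 (t m) (t (m+1)) (P 0 (t m)) (P (t m) (t (m+1))) (P 0 (t (m+1)))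
        (fun _ => rfl) (fun _ => rfl) (fun _ => rfl), ih]
      obtain ⟨i, hi⟩ := ht m
      have := hf i (P (t m) (t (m+1))) (by
        intro x
        have hx := x.2
        have hm : (t m : ℝ) ≤ t (m+1) := tm (Nat.le_succ m)
        have h0 := (t m).2.1
        have h1 := (t (m+1)).2.2
        have hA : (t m : ℝ) ≤ t m + x * (t (m+1) - t m) := by
          nlinarith [mul_nonneg hx.1 (sub_nonneg.2 hm)]
        have hB : (t m : ℝ) + x * (t (m+1) - t m) ≤ t (m+1) := by
          nlinarith [mul_nonneg (sub_nonneg.2 hx.2) (sub_nonneg.2 hm)]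
        have hy : (⟨(t m : ℝ) + x * (t (m+1) - t m), h0.trans hA, hB.trans h1⟩ : I) ∈
            Set.Icc (t m) (t (m+1)) := ⟨hA, hB⟩
        have := hi hy
        have e := hGI (⟨(t m : ℝ) + x * (t (m+1) - t m), h0.trans hA, hB.trans h1⟩ : I)
        simp only [P, ContinuousMap.coe_mk]
        simp only at e
        rw [e]; exact this)
      rw [this]
      have e0 : P (t m) (t (m+1)) 0 = γ (t m) := by
        simp only [P, ContinuousMap.coe_mk]; rw [← hGI]; simp
      have e1 : P (t m) (t (m+1)) 1 = γ (t (m+1)) := by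
        simp only [P, ContinuousMap.coe_mk]; rw [← hGI]; simp
      rw [e0, e1]; ring
  have := key N
  rw [hN N le_rfl] at this
  rw [← this]; congr 1; ext x
  rw [← hGI]; simp [P]

end IsCocycle

section linalg
variable {K C2 C1 C0 : Type} [Field K] [AddCommGroup C2] [AddCommGroup C1] [AddCommGroup C0]
  [Module K C2] [Module K C1] [Module K C0]

theorem finrank_homology_aux (f : C2 →ₗ[K] C1) (g : C1 →ₗ[K] C0) (f' : C2 →ₗ[K] LinearMap.ker g)
    (hf' : ∀ x, (f' x : C1) = f x) {ι : Type} [Fintype ι] [Nonempty ι]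
    (w : ι → C1 →ₗ[K] K) (hwf : ∀ i x, w i (f x) = 0)
    (hspan : ∀ ψ : C1 →ₗ[K] K, (∀ x, ψ (f x) = 0) →
      ∃ c : ι → K, ∀ x ∈ LinearMap.ker g, ψ x = ∑ i, c i * w i x)
    (hrel : ∀ c : ι → K, (∀ x ∈ LinearMap.ker g, ∑ i, c i * w i x = 0) ↔ ∃ a, ∀ i, c i = a) :
    Module.finrank K (LinearMap.ker g ⧸ LinearMap.range f') = Fintype.card ι - 1 := by
  classical
  let T : LinearMap.ker g →ₗ[K] (ι → K) := LinearMap.pi fun i => (w i).comp (Submodule.subtype _)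
  have hT : LinearMap.ker T = LinearMap.range f' := by
    apply le_antisymm
    · intro x hx
      by_contra hxB
      have hxB' : (x : C1) ∉ LinearMap.range f := by
        rintro ⟨y, hy⟩
        exact hxB ⟨y, Subtype.ext (by rw [hf', hy])⟩
      obtain ⟨ψ, hψ1, hψ2⟩ := Submodule.exists_le_ker_of_notMem hxB'
      obtain ⟨c, hc⟩ := hspan ψ (fun y => hψ2 ⟨y, rfl⟩)
      apply hψ1
      rw [hc x x.2]
      refine Finset.sum_eq_zero fun i _ => ?_
      have : T x i = 0 := by rw [LinearMap.mem_ker.1 hx]; rfl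
      have : w i x = 0 := this
      rw [this, mul_zero]
    · rintro _ ⟨y, rfl⟩
      rw [LinearMap.mem_ker]
      ext i
      show w i (f' y) = 0
      rw [hf', hwf]
  rw [← hT, LinearEquiv.finrank_eq T.quotKerEquivRange]
  have h1 := Subspace.finrank_add_finrank_dualAnnihilator_eq (LinearMap.range T)
  let e : Module.Dual K (ι → K) := ∑ i, LinearMap.proj i
  have he : (LinearMap.range T).dualAnnihilator = Submodule.span K {e} := by
    ext ψ
    rw [Submodule.mem_span_singleton, Submodule.mem_dualAnnihilator]
    have hψ : ∀ y, ψ y = ∑ i, ψ (Pi.single i 1) * y i := by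
      intro y
      conv_lhs => rw [pi_eq_sum_univ' y]
      rw [map_sum]
      refine Finset.sum_congr rfl fun i _ => ?_
      rw [map_smul, smul_eq_mul, mul_comm]
    have := hrel (fun i => ψ (Pi.single i 1))
    have h2 : (∀ w ∈ LinearMap.range T, ψ w = 0) ↔
        ∀ x ∈ LinearMap.ker g, ∑ i, ψ (Pi.single i 1) * w i x = 0 := by
      constructor
      · intro h x hx
        have := h (T ⟨x, hx⟩) ⟨_, rfl⟩
        rw [hψ] at this
        exact this
      · rintro h _ ⟨x, rfl⟩
        rw [hψ]
        exact h x x.2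
    rw [h2, this]
    refine exists_congr fun a => ⟨fun h => ?_, fun h i => ?_⟩
    · ext i
      simp [e, h]
    · rw [← h]
      simp [e, LinearMap.sum_apply]
  have hne : e ≠ 0 := by
    intro h0
    obtain ⟨i⟩ := ‹Nonempty ι›
    have := congrArg (fun ψ => ψ (Pi.single i 1)) h0
    simp [e, LinearMap.sum_apply] at this
  rw [he, finrank_span_singleton hne, Module.finrank_fintype_fun_eq_card] at h1
  omega
end linalg

section singular
open Simplicial Opposite

variable (X : TopCat.{0})

/-- the singular chain complex -/
noncomputable abbrev singC : ChainComplex (ModuleCat ℂ) ℕ :=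
  (alternatingFaceMapComplex (ModuleCat ℂ)).obj
    (((SimplicialObject.whiskering _ _).obj (ModuleCat.free ℂ)).obj (TopCat.toSSet.obj X))

/-- singular simplices -/
abbrev Sing (n : ℕ) : Type := (TopCat.toSSet.obj X).obj (op ⦋n⦌)

/-- the differential -/
noncomputable def dlin (n : ℕ) : (Sing X (n+1) →₀ ℂ) →ₗ[ℂ] (Sing X n →₀ ℂ) :=
  ∑ i : Fin (n+2), ((-1 : ℤ)^(i:ℕ)) • Finsupp.lmapDomain ℂ ℂ ((TopCat.toSSet.obj X).δ i)

theorem singC_d (n : ℕ) : ((singC X).d (n+1) n).hom = dlin X n := by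
  rw [alternatingFaceMapComplex_obj_d]
  unfold AlternatingFaceMapComplex.objD dlin
  refine (ModuleCat.hom_sum _ _).trans ?_
  refine Finset.sum_congr rfl fun i _ => ?_
  exact ModuleCat.hom_zsmul _ _

theorem dlin_single (n : ℕ) (τ : Sing X (n+1)) :
    dlin X n (Finsupp.single τ 1) =
      ∑ i : Fin (n+2), ((-1 : ℂ)^(i:ℕ)) • (Finsupp.single ((TopCat.toSSet.obj X).δ i τ) 1) := by
  unfold dlin
  rw [LinearMap.sum_apply]
  refine Finset.sum_congr rfl fun i _ => ?_
  rw [LinearMap.smul_apply, Finsupp.lmapDomain_apply, Finsupp.mapDomain_single,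
    ← Int.cast_smul_eq_zsmul ℂ]
  simp

theorem finrank_H1_aux : Module.finrank ℂ (H1.obj X) =
    Module.finrank ℂ (LinearMap.ker (ModuleCat.Hom.hom ((singC X).sc' 2 1 0).g) ⧸
      LinearMap.range ((singC X).sc' 2 1 0).moduleCatToCycles) := by
  have e := (HomologicalComplex.homologyIsoSc' (singC X) 2 1 0 (by simp) (by simp)) ≪≫
    ShortComplex.moduleCatHomologyIso _
  exact LinearEquiv.finrank_eq e.toLinearEquiv

theorem finrank_H1_lin {ι : Type} [Fintype ι] [Nonempty ι]
    (w : ι → (Sing X 1 →₀ ℂ) →ₗ[ℂ] ℂ) (hwf : ∀ i x, w i (dlin X 1 x) = 0)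
    (hspan : ∀ ψ : (Sing X 1 →₀ ℂ) →ₗ[ℂ] ℂ, (∀ x, ψ (dlin X 1 x) = 0) →
      ∃ c : ι → ℂ, ∀ x, dlin X 0 x = 0 → ψ x = ∑ i, c i * w i x)
    (hrel : ∀ c : ι → ℂ, (∀ x, dlin X 0 x = 0 → ∑ i, c i * w i x = 0) ↔ ∃ a, ∀ i, c i = a) :
    Module.finrank ℂ (H1.obj X) = Fintype.card ι - 1 := by
  rw [finrank_H1_aux]
  have e2 : ModuleCat.Hom.hom ((singC X).sc' 2 1 0).f = dlin X 1 := singC_d X 1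
  have e1 : ModuleCat.Hom.hom ((singC X).sc' 2 1 0).g = dlin X 0 := singC_d X 0
  refine finrank_homology_aux (ModuleCat.Hom.hom ((singC X).sc' 2 1 0).f)
    (ModuleCat.Hom.hom ((singC X).sc' 2 1 0).g) _ (fun x => rfl) w ?_ ?_ ?_
  · intro i x
    rw [e2]; exact hwf i x
  · rw [e1, e2]; exact hspan
  · rw [e1]; exact hrel

theorem face_apply (n : ℕ) (τ : Sing X (n+1)) (i : Fin (n+2)) (x : stdSimplex ℝ (Fin (n+1))) :
    TopCat.toSSetObjEquiv X (op ⦋n⦌) ((TopCat.toSSet.obj X).δ i τ) x =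
      TopCat.toSSetObjEquiv X (op ⦋n+1⦌) τ (stdSimplex.map (Fin.succAbove i) x) := by
  rfl


/-- point of the 1-simplex -/
def pt1 (t : I) : stdSimplex ℝ (Fin 2) :=
  ⟨![1 - (t : ℝ), t], by
    have := t.2
    constructor
    · intro i; fin_cases i
      · simpa using this.2
      · simpa using this.1
    · simp [Fin.sum_univ_two]⟩

theorem continuous_pt1 : Continuous pt1 := by
  unfold pt1
  refine Continuous.subtype_mk (continuous_pi fun i => ?_) _
  fin_cases i <;> simp <;> fun_prop

/-- coordinate on a 1-simplex -/
def co1 (x : stdSimplex ℝ (Fin 2)) : I := ⟨x.1 1, x.2.1 1, by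
      have := x.2.2; rw [Fin.sum_univ_two] at this; have := x.2.1 0; linarith⟩

theorem continuous_co1 : Continuous co1 :=
  Continuous.subtype_mk ((continuous_apply 1).comp continuous_subtype_val) _

theorem co1_pt1 (t : I) : co1 (pt1 t) = t := by ext; simp [co1, pt1]

theorem pt1_co1 (x) : pt1 (co1 x) = x := by
  ext i
  have := x.2.2; rw [Fin.sum_univ_two] at this
  fin_cases i
  · show 1 - x.1 1 = x.1 0
    linarith
  · rfl

variable {X}

/-- path of a 1-simplex -/
noncomputable def pathOf (τ : Sing X 1) : C(I, X) :=
  (TopCat.toSSetObjEquiv X (op ⦋1⦌) τ).comp ⟨pt1, continuous_pt1⟩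

/-- 1-simplex of a path -/
noncomputable def simpOf (γ : C(I, X)) : Sing X 1 :=
  (TopCat.toSSetObjEquiv X (op ⦋1⦌)).symm (γ.comp ⟨co1, continuous_co1⟩)

theorem pathOf_simpOf (γ : C(I, X)) : pathOf (simpOf γ) = γ := by
  ext t
  show (γ (co1 (pt1 t))) = γ t
  rw [co1_pt1]

theorem simpOf_pathOf (τ : Sing X 1) : simpOf (pathOf τ) = τ := by
  unfold simpOf
  rw [Equiv.symm_apply_eq]
  ext x
  show (TopCat.toSSetObjEquiv X (op ⦋1⦌) τ) (pt1 (co1 x)) = _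
  rw [pt1_co1]

theorem pathOf_eq_iff (τ : Sing X 1) (γ : C(I, X)) : pathOf τ = γ ↔ τ = simpOf γ := by
  constructor
  · rintro rfl; rw [simpOf_pathOf]
  · rintro rfl; rw [pathOf_simpOf]

theorem map_succAbove_pt1 (i : Fin 3) (t : I) :
    (stdSimplex.map (Fin.succAbove i) (pt1 t)).1 = (![![0, 1 - (t:ℝ), t], ![1 - (t:ℝ), 0, t], ![1 - (t:ℝ), t, 0]] : Fin 3 → Fin 3 → ℝ) i := by
  ext j
  show (FunOnFinite.linearMap ℝ ℝ (Fin.succAbove i)) (pt1 t).1 j = _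
  rw [FunOnFinite.linearMap_apply_apply, Finset.sum_filter, Fin.sum_univ_two]
  fin_cases i <;> fin_cases j <;> simp [pt1, Fin.succAbove]

/-- triangle in the square -/
noncomputable def triOf (s : C(I × I, X)) : Sing X 2 :=
  (TopCat.toSSetObjEquiv X (op ⦋2⦌)).symm ⟨fun x : stdSimplex ℝ (Fin 3) => s
    (⟨x.1 1 + x.1 2, add_nonneg (x.2.1 1) (x.2.1 2), by
      have := x.2.2; rw [Fin.sum_univ_three] at this; have := x.2.1 0; linarith⟩,
     ⟨x.1 2, x.2.1 2, by
      have := x.2.2; rw [Fin.sum_univ_three] at this; have := x.2.1 0; have := x.2.1 1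
      linarith⟩), by
      refine s.continuous.comp (Continuous.prodMk ?_ ?_)
      · exact Continuous.subtype_mk (((continuous_apply 1).comp continuous_subtype_val).add ((continuous_apply 2).comp continuous_subtype_val)) _
      · exact Continuous.subtype_mk ((continuous_apply 2).comp continuous_subtype_val) _⟩

theorem tri_face (s : C(I × I, X)) (i : Fin 3) (t : I) :
   pathOf ((TopCat.toSSet.obj X).δ i (triOf s)) t = s ((![(1, t), (t, t), (t, 0)] : Fin 3 → I × I) i) := by
  show TopCat.toSSetObjEquiv X (op ⦋1⦌) ((TopCat.toSSet.obj X).δ i (triOf s)) (pt1 t) = _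
  rw [face_apply]
  have h := map_succAbove_pt1 i t
  show s (⟨(stdSimplex.map (Fin.succAbove i) (pt1 t)).1 1 + (stdSimplex.map (Fin.succAbove i) (pt1 t)).1 2, _⟩, ⟨(stdSimplex.map (Fin.succAbove i) (pt1 t)).1 2, _⟩) = _
  congr 1
  ext
  · simp only [h]
    fin_cases i <;> simp
  · simp only [h]
    fin_cases i <;> simp

theorem dlin_simpOf (γ : C(I, X)) : dlin X 0 (Finsupp.single (simpOf γ) 1) =
    Finsupp.single ((TopCat.toSSetObjEquiv X (op ⦋0⦌)).symm (ContinuousMap.const _ (γ 1))) 1 -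
    Finsupp.single ((TopCat.toSSetObjEquiv X (op ⦋0⦌)).symm (ContinuousMap.const _ (γ 0))) 1 := by
  rw [dlin_single, Fin.sum_univ_two]
  have h : ∀ i : Fin 2, (TopCat.toSSet.obj X).δ i (simpOf γ) =
    ((TopCat.toSSetObjEquiv X (op ⦋0⦌)).symm (ContinuousMap.const _ (γ ((![1, 0] : Fin 2 → I) i)))) := by
    intro i
    rw [Equiv.eq_symm_apply]
    ext x
    rw [face_apply]
    show γ (co1 (stdSimplex.map (Fin.succAbove i) x)) = γ _
    congr 1
    ext
    show (FunOnFinite.linearMap ℝ ℝ (Fin.succAbove i)) x.1 1 = _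
    have hx := x.2.2
    rw [Fin.sum_univ_one] at hx
    rw [FunOnFinite.linearMap_apply_apply, Finset.sum_filter, Fin.sum_univ_one]
    fin_cases i <;> simp [Fin.succAbove, hx]
  rw [h, h]
  simp [sub_eq_add_neg]

/-- functional on 1-chains of a path function -/
noncomputable def func (φ : C(I, X) → ℂ) : (Sing X 1 →₀ ℂ) →ₗ[ℂ] ℂ :=
  Finsupp.lsum ℂ (fun τ => LinearMap.toSpanSingleton ℂ ℂ (φ (pathOf τ)))

theorem func_single (φ : C(I, X) → ℂ) (τ : Sing X 1) : func φ (Finsupp.single τ 1) = φ (pathOf τ) := by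
  simp [func]

theorem func_d {φ : C(I, X) → ℂ} (h : IsCocycle φ) (x) : func φ (dlin X 1 x) = 0 := by
  suffices (func φ).comp (dlin X 1) = 0 from congrArg (fun f => f x) this
  ext τ
  simp only [LinearMap.coe_comp, Function.comp_apply, Finsupp.lsingle_apply]
  rw [dlin_single, map_sum, Fin.sum_univ_three]
  simp only [map_smul, func_single]
  let E := TopCat.toSSetObjEquiv X (op ⦋2⦌) τ
  let Q : I × I → stdSimplex ℝ (Fin 3) := fun z => ⟨![1 - (z.1:ℝ), z.1 * (1 - z.2), z.1 * z.2], by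
    have h1 := z.1.2
    have h2 := z.2.2
    constructor
    · intro i; fin_cases i
      · simpa using h1.2
      · simpa using mul_nonneg h1.1 (sub_nonneg.2 h2.2)
      · simpa using mul_nonneg h1.1 h2.1
    · simp [Fin.sum_univ_three]; ring⟩
  have hQ : Continuous Q := by
    refine Continuous.subtype_mk (continuous_pi fun i => ?_) _
    fin_cases i <;> simp <;> fun_prop
  have hface : ∀ (i : Fin 3) (t : I), pathOf ((TopCat.toSSet.obj X).δ i τ) t =
      E (stdSimplex.map (Fin.succAbove i) (pt1 t)) := fun i t => rfl
  have := h.sq (fun z => E (Q z)) (by fun_prop) (pathOf ((TopCat.toSSet.obj X).δ 2 τ))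
    (pathOf ((TopCat.toSSet.obj X).δ 0 τ)) (ContinuousMap.const _ (E (Q (0,0))))
    (pathOf ((TopCat.toSSet.obj X).δ 1 τ))
    (by
      intro t; rw [hface]; congr 1; apply Subtype.ext; rw [map_succAbove_pt1]
      ext j; fin_cases j <;> simp [Q])
    (by
      intro t; rw [hface]; congr 1; apply Subtype.ext; rw [map_succAbove_pt1]
      ext j; fin_cases j <;> simp [Q])
    (by
      intro t; rw [ContinuousMap.const_apply]; congr 1; apply Subtype.ext
      ext j; fin_cases j <;> simp [Q])
    (by
      intro t; rw [hface]; congr 1; apply Subtype.ext; rw [map_succAbove_pt1]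
      ext j; fin_cases j <;> simp [Q])
  rw [h.const] at this
  simp
  linear_combination this

theorem cocycle_of_func (ψ : (Sing X 1 →₀ ℂ) →ₗ[ℂ] ℂ) (hψ : ∀ x, ψ (dlin X 1 x) = 0) :
    IsCocycle (fun γ => ψ (Finsupp.single (simpOf γ) 1)) := by
  have key : ∀ s : C(I × I, X), ∀ b r d : C(I, X), (∀ t, b t = s (t, 0)) → (∀ t, r t = s (1, t)) →
      (∀ t, d t = s (t, t)) →
      ψ (Finsupp.single (simpOf r) 1) - ψ (Finsupp.single (simpOf d) 1)
        + ψ (Finsupp.single (simpOf b) 1) = 0 := by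
    intro s b r d hb hr hd
    have := hψ (Finsupp.single (triOf s) 1)
    rw [dlin_single, map_sum, Fin.sum_univ_three] at this
    simp only [map_smul] at this
    have h0 : (TopCat.toSSet.obj X).δ 0 (triOf s) = simpOf r := by
      rw [← pathOf_eq_iff]; ext t; rw [tri_face, hr]; simp
    have h1 : (TopCat.toSSet.obj X).δ 1 (triOf s) = simpOf d := by
      rw [← pathOf_eq_iff]; ext t; rw [tri_face, hd]; simp
    have h2 : (TopCat.toSSet.obj X).δ 2 (triOf s) = simpOf b := by
      rw [← pathOf_eq_iff]; ext t; rw [tri_face, hb]; simp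
    rw [h0, h1, h2] at this
    simp at this
    linear_combination this
  constructor
  · intro x
    have := key (ContinuousMap.const _ x) (ContinuousMap.const _ x) (ContinuousMap.const _ x)
      (ContinuousMap.const _ x) (fun _ => rfl) (fun _ => rfl) (fun _ => rfl)
    linear_combination this
  · intro s
    have h1 := key s ⟨fun t => s (t, 0), by fun_prop⟩ ⟨fun t => s (1, t), by fun_prop⟩
      ⟨fun t => s (t, t), by fun_prop⟩ (fun _ => rfl) (fun _ => rfl) (fun _ => rfl)
    have h2 := key (s.comp ⟨Prod.swap, continuous_swap⟩) ⟨fun t => s (0, t), by fun_prop⟩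
      ⟨fun t => s (t, 1), by fun_prop⟩ ⟨fun t => s (t, t), by fun_prop⟩
      (fun _ => rfl) (fun _ => rfl) (fun _ => rfl)
    linear_combination h1 - h2

theorem func_loops {φ : C(I, X) → ℂ} (h : IsCocycle φ) (hl : ∀ γ : C(I, X), γ 0 = γ 1 → φ γ = 0)
    (x) (hx : dlin X 0 x = 0) : func φ x = 0 := by
  obtain ⟨f, hf⟩ := h.exists_primitive hl
  let g : (Sing X 0 →₀ ℂ) →ₗ[ℂ] ℂ := Finsupp.lsum ℂ (fun τ => LinearMap.toSpanSingleton ℂ ℂ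
    (f (TopCat.toSSetObjEquiv X (op ⦋0⦌) τ (stdSimplex.vertex (0 : Fin 1)))))
  have : func φ = g.comp (dlin X 0) := by
    ext τ
    simp only [LinearMap.coe_comp, Function.comp_apply, Finsupp.lsingle_apply]
    rw [func_single, hf]
    conv_rhs => rw [← simpOf_pathOf τ]
    rw [dlin_simpOf, map_sub]
    simp [g]
  rw [this, LinearMap.comp_apply, hx, map_zero]

theorem finrank_H1 (X : Type) [TopologicalSpace X] {ι : Type} [Fintype ι] [Nonempty ι]
    (w : ι → C(I, X) → ℂ) (hw : ∀ i, IsCocycle (w i))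
    (hspan : ∀ φ : C(I, X) → ℂ, IsCocycle φ →
      ∃ c : ι → ℂ, ∀ γ, γ 0 = γ 1 → φ γ = ∑ i, c i * w i γ)
    (hrel : ∀ c : ι → ℂ, (∀ γ, γ 0 = γ 1 → ∑ i, c i * w i γ = 0) ↔ ∃ a, ∀ i, c i = a) :
    Module.finrank ℂ (H1.obj (TopCat.of X)) = Fintype.card ι - 1 := by
  have hsum : ∀ c : ι → ℂ, IsCocycle (fun γ => ∑ i, c i * w i γ) := fun c =>
    IsCocycle.sum _ fun i _ => (hw i).smul (c i)
  have hfs : ∀ c : ι → ℂ, ∀ x, func (X := TopCat.of X) (fun γ => ∑ i, c i * w i γ) x =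
      ∑ i, c i * func (X := TopCat.of X) (w i) x := by
    intro c x
    have : func (X := TopCat.of X) (fun γ => ∑ i, c i * w i γ) =
      ∑ i, c i • func (X := TopCat.of X) (w i) := by
      ext τ
      simp [func_single]
    rw [this]; simp
  refine finrank_H1_lin (TopCat.of X) (fun i => func (w i)) (fun i x => func_d (hw i) x) ?_ ?_
  · intro ψ hψ
    have h := cocycle_of_func ψ hψ
    obtain ⟨c, hc⟩ := hspan _ h
    refine ⟨c, fun x hx => ?_⟩
    have h2 := func_loops (X := TopCat.of X) (h.sub (hsum c))
      (fun γ hγ => sub_eq_zero.2 (hc γ hγ)) x hx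
    have h3 : func (X := TopCat.of X) (fun γ => ψ (Finsupp.single (simpOf γ) 1) - ∑ i, c i * w i γ)
      = ψ - func (X := TopCat.of X) (fun γ => ∑ i, c i * w i γ) := by
      ext τ
      simp [func_single, simpOf_pathOf]
    rw [h3, LinearMap.sub_apply, hfs] at h2
    linear_combination h2
  · intro c
    rw [← hrel]
    constructor
    · intro h γ hγ
      have := h (Finsupp.single (simpOf (X := TopCat.of X) γ) 1) (by rw [dlin_simpOf, hγ, sub_self])
      simpa [func_single, pathOf_simpOf] using this
    · intro h x hx
      rw [← hfs]
      exact func_loops (hsum c) h x hx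

end singular

section winding

theorem log_unique {A : Type} [TopologicalSpace A] [PreconnectedSpace A] (L L' : A → ℂ)
    (hL : Continuous L) (hL' : Continuous L') (h : ∀ a, Complex.exp (L a) = Complex.exp (L' a)) :
    ∃ n : ℤ, ∀ a, L a = L' a + n * (2 * Real.pi * Complex.I) := by
  have : ∀ a, ∃ n : ℤ, L a = L' a + n * (2 * Real.pi * Complex.I) := fun a =>
    Complex.exp_eq_exp_iff_exists_int.1 (h a)
  choose n hn using this
  have hc : Continuous n := by
    have h1 : Continuous (fun a => ((n a : ℤ) : ℂ)) := by
      have : (fun a => ((n a : ℤ) : ℂ)) = fun a => (L a - L' a) / (2 * Real.pi * Complex.I) := by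
        ext a
        rw [hn a]
        field_simp [Real.pi_ne_zero, Complex.I_ne_zero]
        ring
      rw [this]; fun_prop
    have h2 : Continuous (fun a => ((n a : ℤ) : ℝ)) := by
      have := Complex.continuous_re.comp h1
      simpa [Function.comp_def] using this
    exact Int.isClosedEmbedding_coe_real.isInducing.continuous_iff.2 h2
  rcases isEmpty_or_nonempty A with hA | ⟨⟨a0⟩⟩
  · exact ⟨0, fun a => (IsEmpty.false a).elim⟩
  · refine ⟨n a0, fun a => ?_⟩
    rw [hn a, PreconnectedSpace.constant inferInstance hc (x := a) (y := a0)]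

theorem exists_log_real (g : ℝ × ℝ → ℂ) (hg : Continuous g) (h0 : ∀ x, g x ≠ 0) :
    ∃ L : ℝ × ℝ → ℂ, Continuous L ∧ ∀ x, Complex.exp (L x) = g x := by
  obtain ⟨f, ⟨-, hf⟩, -⟩ := Complex.isCoveringMapOn_exp.existsUnique_continuousMap_lifts
    (⟨g, hg⟩ : C(ℝ × ℝ, ℂ)) (a₀ := (0, 0)) (Complex.exp_log (h0 (0, 0))) (fun x => h0 x)
  exact ⟨f, f.continuous, fun x => congrFun hf x⟩

theorem exists_log_sq (g : I × I → ℂ) (hg : Continuous g) (h0 : ∀ x, g x ≠ 0) :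
    ∃ L : I × I → ℂ, Continuous L ∧ ∀ x, Complex.exp (L x) = g x := by
  obtain ⟨L, hL, h⟩ := exists_log_real (fun x => g (Set.projIcc 0 1 zero_le_one x.1,
    Set.projIcc 0 1 zero_le_one x.2)) (by fun_prop) (fun x => h0 _)
  refine ⟨fun x => L (x.1, x.2), by fun_prop, fun x => ?_⟩
  rw [h]; simp

theorem exists_log_path (g : I → ℂ) (hg : Continuous g) (h0 : ∀ x, g x ≠ 0) :
    ∃ L : I → ℂ, Continuous L ∧ ∀ x, Complex.exp (L x) = g x := by
  obtain ⟨L, hL, h⟩ := exists_log_sq (fun x => g x.1) (by fun_prop) (fun x => h0 _)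
  exact ⟨fun x => L (x, 0), by fun_prop, fun x => h _⟩

open Classical in
/-- total variation of the logarithm along a path -/
noncomputable def wind (g : I → ℂ) : ℂ :=
  if h : ∃ L : I → ℂ, Continuous L ∧ ∀ x, Complex.exp (L x) = g x then
    h.choose 1 - h.choose 0 else 0

theorem wind_eq (g L : I → ℂ) (hL : Continuous L) (h : ∀ x, Complex.exp (L x) = g x) :
    wind g = L 1 - L 0 := by
  have hex : ∃ L : I → ℂ, Continuous L ∧ ∀ x, Complex.exp (L x) = g x := ⟨L, hL, h⟩
  unfold wind
  rw [dif_pos hex]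
  obtain ⟨n, hn⟩ := log_unique hex.choose L hex.choose_spec.1 hL (fun a => by
    rw [hex.choose_spec.2, h])
  rw [hn, hn]; ring

theorem wind_mul (g h : I → ℂ) (hg : Continuous g) (hh : Continuous h) (g0 : ∀ t, g t ≠ 0)
    (h0 : ∀ t, h t ≠ 0) : wind (fun t => g t * h t) = wind g + wind h := by
  obtain ⟨L, hL, eL⟩ := exists_log_path g hg g0
  obtain ⟨M, hM, eM⟩ := exists_log_path h hh h0
  rw [wind_eq g L hL eL, wind_eq h M hM eM, wind_eq _ (fun t => L t + M t) (by fun_prop)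
    (fun t => by rw [Complex.exp_add, eL, eM])]
  ring

theorem wind_const (c : ℂ) (hc : c ≠ 0) : wind (fun _ => c) = 0 := by
  rw [wind_eq _ (fun _ => Complex.log c) (by fun_prop) (fun _ => Complex.exp_log hc)]; ring

theorem wind_prod {ι : Type} (S : Finset ι) (g : ι → I → ℂ) (hg : ∀ i, Continuous (g i))
    (g0 : ∀ i t, g i t ≠ 0) : wind (fun t => ∏ i ∈ S, g i t) = ∑ i ∈ S, wind (g i) := by
  classical
  induction S using Finset.induction_on with
  | empty => simp [wind_const 1 one_ne_zero]
  | insert a S ha ih =>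
    simp only [Finset.prod_insert ha, Finset.sum_insert ha]
    rw [wind_mul _ _ (hg a) (by fun_prop) (g0 a) (fun t => Finset.prod_ne_zero_iff.2 fun i _ => g0 i t), ih]

theorem wind_cocycle {X : Type} [TopologicalSpace X] (g : X → ℂ) (hg : Continuous g)
    (g0 : ∀ x, g x ≠ 0) : IsCocycle (fun γ : C(I, X) => wind (fun t => g (γ t))) where
  const x := wind_const _ (g0 x)
  square s := by
    obtain ⟨L, hL, eL⟩ := exists_log_sq (fun z => g (s z)) (by fun_prop) (fun z => g0 _)
    simp only [ContinuousMap.coe_mk]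
    rw [wind_eq _ (fun t => L (t, 0)) (by fun_prop) (fun t => eL _),
      wind_eq _ (fun t => L (1, t)) (by fun_prop) (fun t => eL _),
      wind_eq _ (fun t => L (0, t)) (by fun_prop) (fun t => eL _),
      wind_eq _ (fun t => L (t, 1)) (by fun_prop) (fun t => eL _)]
    ring

end winding

section plane

open Filter Topology

/-- free homotopy invariance for loops -/
theorem IsCocycle.loop_homotopy {X : Type} [TopologicalSpace X] {φ : C(I, X) → ℂ}
    (h : IsCocycle φ) (s : I × I → X) (hs : Continuous s) (hl : ∀ t, s (0, t) = s (1, t))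
    (b u : C(I, X)) (hb : ∀ t, b t = s (t, 0)) (hu : ∀ t, u t = s (t, 1)) : φ b = φ u := by
  have := h.sq s hs b ⟨fun t => s (1, t), by fun_prop⟩ ⟨fun t => s (1, t), by fun_prop⟩ u hb
    (fun _ => rfl) (fun t => (hl t).symm) hu
  linear_combination this

theorem const_off (E : Set ℝ) (k : ℝ → ℂ)
    (h1 : ∀ x, ∃ v, ∀ᶠ y in 𝓝[≠] x, k y = v) (h2 : ∀ x ∉ E, ∀ᶠ y in 𝓝 x, k y = k x) :
    ∃ κ, ∀ x ∉ E, k x = κ := by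
  choose v hv using h1
  have hlc : IsLocallyConstant v := by
    rw [IsLocallyConstant.iff_eventually_eq]
    intro x
    have h3 := eventually_eventually_nhdsWithin.2 (hv x)
    have h4 : ∀ᶠ y in 𝓝[≠] x, v y = v x := by
      filter_upwards [h3, self_mem_nhdsWithin] with y hy hyx
      have h5 : ∀ᶠ w in 𝓝 y, k w = v x := by
        rwa [IsOpen.nhdsWithin_eq isOpen_compl_singleton hyx] at hy
      obtain ⟨w, hw1, hw2⟩ := ((h5.filter_mono nhdsWithin_le_nhds).and (hv y)).exists
      rw [← hw2, hw1]
    rw [eventually_nhdsWithin_iff] at h4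
    filter_upwards [h4] with y hy
    by_cases hyx : y = x
    · rw [hyx]
    · exact hy hyx
  refine ⟨v 0, fun x hx => ?_⟩
  obtain ⟨w, hw1, hw2⟩ := (((h2 x hx).filter_mono nhdsWithin_le_nhds).and (hv x)).exists
  rw [← hw1, hw2]
  exact hlc.apply_eq_of_isPreconnected isPreconnected_univ trivial trivial

theorem log_diff (w : ℂ) (hw : w.re ≠ 0) :
    (Complex.log (Complex.I * w) - Complex.log Complex.I) -
    (Complex.log (-Complex.I * w) - Complex.log (-Complex.I)) =
    if 0 < w.re then 0 else - (2 * Real.pi * Complex.I) := by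
  have key : ∀ w : ℂ, 0 < w.re → Complex.log (Complex.I * w) = Complex.log Complex.I + Complex.log w
      ∧ Complex.log (-Complex.I * w) = Complex.log (-Complex.I) + Complex.log w := by
    intro w hw
    have w0 : w ≠ 0 := by rintro rfl; simp at hw
    have ha : |w.arg| < Real.pi / 2 := Complex.abs_arg_lt_pi_div_two_iff.2 (Or.inl hw)
    rw [abs_lt] at ha
    constructor
    · rw [Complex.log_mul_eq_add_log_iff Complex.I_ne_zero w0, Complex.arg_I]
      constructor <;> linarith [Real.pi_pos]
    · rw [Complex.log_mul_eq_add_log_iff (neg_ne_zero.2 Complex.I_ne_zero) w0, Complex.arg_neg_I]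
      constructor <;> linarith [Real.pi_pos]
  split_ifs with h
  · rw [(key w h).1, (key w h).2]; ring
  · have h' : 0 < (-w).re := by
      rw [Complex.neg_re]; rcases lt_or_gt_of_ne hw with h1 | h1 <;> [linarith; exact absurd h1 h]
    have k1 := (key _ h').1
    have k2 := (key _ h').2
    have e1 : Complex.I * w = -Complex.I * -w := by ring
    have e2 : -Complex.I * w = Complex.I * -w := by ring
    rw [e1, e2, k1, k2, Complex.log_I, Complex.log_neg_I]; ring

variable {ι : Type} [Fintype ι]

/-- complement of finitely many points -/
abbrev Punc (z : ι → ℂ) : Type := {u : ℂ // ∀ i, u ≠ z i}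

/-- plane minus vertical rays -/
def Slit (z : ι → ℂ) (ε : ℝ) : Set (Punc z) :=
  {u | ∀ i, u.1.re = (z i).re → ε * u.1.im < ε * (z i).im}

theorem isOpen_Slit (z : ι → ℂ) (ε : ℝ) : IsOpen (Slit z ε) := by
  have : Slit z ε = ⋂ i, ({u | u.1.re ≠ (z i).re} ∪ {u | ε * u.1.im < ε * (z i).im}) := by
    ext u; simp [Slit, imp_iff_not_or]
  rw [this]
  refine isOpen_iInter_of_finite fun i => IsOpen.union ?_ ?_
  · exact isOpen_ne_fun (by fun_prop) (by fun_prop)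
  · exact isOpen_lt (by fun_prop) (by fun_prop)

theorem exists_level (z : ι → ℂ) (ε : ℝ) (hε : ε ≠ 0) : ∃ l : ℝ, ∀ i, ε * l < ε * (z i).im := by
  obtain ⟨m, hm⟩ := (Set.finite_range (fun i => ε * (z i).im)).bddBelow
  refine ⟨(m - 1) / ε, fun i => ?_⟩
  have := hm ⟨i, rfl⟩
  simp only at this
  rw [mul_div_cancel₀ _ hε]; linarith

theorem Slit_loop (z : ι → ℂ) (ε : ℝ) (hε : ε ≠ 0) {φ : C(I, Punc z) → ℂ} (h : IsCocycle φ)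
    (γ : C(I, Punc z)) (hγ : ∀ t, γ t ∈ Slit z ε) (hl : γ 0 = γ 1) : φ γ = 0 := by
  obtain ⟨l, hlev⟩ := exists_level z ε hε
  have mem : ∀ x τ y : ℝ, 0 ≤ τ → τ ≤ 1 → (∀ i, x = (z i).re → ε * y < ε * (z i).im) →
      ∀ i, (⟨x, (1 - τ) * y + τ * l⟩ : ℂ) ≠ z i := by
    intro x τ y h0 h1 hy i hi
    have hx : x = (z i).re := by rw [← hi]
    have him : (1 - τ) * y + τ * l = (z i).im := by rw [← hi]
    have := hy i hx
    have h3 := hlev i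
    rw [← him] at this h3
    rcases h0.eq_or_lt with rfl | h0
    · linarith
    · nlinarith
  have meml : ∀ x : ℝ, ∀ i, (⟨x, l⟩ : ℂ) ≠ z i := by
    intro x i hi
    have := hlev i
    rw [← hi] at this
    exact lt_irrefl _ this
  have mkc : ∀ f g : I × I → ℝ, Continuous f → Continuous g →
      Continuous (fun x => (⟨f x, g x⟩ : ℂ)) := fun f g hf hg => by
    have : (fun x => (⟨f x, g x⟩ : ℂ)) = fun x => (f x : ℂ) + g x * Complex.I := by
      ext x; exact (Complex.re_add_im (⟨f x, g x⟩ : ℂ)).symm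
    rw [this]; fun_prop
  have mkc' : ∀ f g : I → ℝ, Continuous f → Continuous g →
      Continuous (fun x => (⟨f x, g x⟩ : ℂ)) := fun f g hf hg => by
    have : (fun x => (⟨f x, g x⟩ : ℂ)) = fun x => (f x : ℂ) + g x * Complex.I := by
      ext x; exact (Complex.re_add_im (⟨f x, g x⟩ : ℂ)).symm
    rw [this]; fun_prop
  let γ' : C(I, Punc z) := ⟨fun t => ⟨⟨(γ t).1.re, l⟩, meml _⟩, by
    refine Continuous.subtype_mk (mkc' _ _ (by fun_prop) (by fun_prop)) _⟩
  have e1 : φ γ = φ γ' := by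
    refine h.loop_homotopy (fun x => ⟨⟨(γ x.1).1.re, (1 - x.2) * (γ x.1).1.im + x.2 * l⟩,
      mem _ _ _ x.2.2.1 x.2.2.2 (hγ x.1)⟩)
      (Continuous.subtype_mk (mkc _ _ (by fun_prop) (by fun_prop)) _) ?_ _ _ ?_ ?_
    · intro t; simp [hl]
    · intro t; apply Subtype.ext; simp
    · intro t; apply Subtype.ext; simp [γ']
  rw [e1, ← h.const (γ' 0)]
  refine h.loop_homotopy (fun x => ⟨⟨(1 - x.2) * (γ x.1).1.re + x.2 * (γ 0).1.re, l⟩, meml _⟩)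
      (Continuous.subtype_mk (mkc _ _ (by fun_prop) (by fun_prop)) _) ?_ _ _ ?_ ?_
  · intro t; simp [hl]
  · intro t; apply Subtype.ext; simp [γ']
  · intro t; apply Subtype.ext; simp [γ']

end plane

section plane2

open Filter Topology

theorem eventually_const_of_locconst (E : Set ℝ) (hE : E.Finite) (H : ℝ → ℂ)
    (hH : ∀ x y, x ≤ y → (∀ t ∈ Set.Icc x y, t ∉ E) → H x = H y) (x : ℝ) :
    (∃ v, ∀ᶠ y in 𝓝[>] x, H y = v) ∧ (∃ v, ∀ᶠ y in 𝓝[<] x, H y = v) ∧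
    (x ∉ E → ∀ᶠ y in 𝓝 x, H y = H x) := by
  have hc : IsOpen (E \ {x})ᶜ := (hE.subset Set.sdiff_subset).isClosed.isOpen_compl
  obtain ⟨ε, h0, hε⟩ := Metric.isOpen_iff.1 hc x (by simp)
  have hε' : ∀ y, |y - x| < ε → y ≠ x → y ∉ E := fun y hy hyx hyE =>
    hε (show y ∈ Metric.ball x ε by rwa [Metric.mem_ball, Real.dist_eq]) ⟨hyE, hyx⟩
  have hH' : ∀ x y, (∀ t ∈ Set.uIcc x y, t ∉ E) → H x = H y := by
    intro a b hab
    rcases le_total a b with h | h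
    · rw [Set.uIcc_of_le h] at hab; exact hH a b h hab
    · rw [Set.uIcc_of_ge h] at hab; exact (hH b a h hab).symm
  refine ⟨⟨H (x + ε / 2), ?_⟩, ⟨H (x - ε / 2), ?_⟩, ?_⟩
  · filter_upwards [Ioo_mem_nhdsGT (show x < x + ε by linarith)] with y hy
    refine hH' _ _ fun t ht => ?_
    have : t ∈ Set.Ioo x (x + ε) := Set.OrdConnected.uIcc_subset Set.ordConnected_Ioo hy
      ⟨by linarith, by linarith⟩ ht
    exact hε' t (by rw [abs_lt]; constructor <;> linarith [this.1, this.2]) (ne_of_gt this.1)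
  · filter_upwards [Ioo_mem_nhdsLT (show x - ε < x by linarith)] with y hy
    refine hH' _ _ fun t ht => ?_
    have : t ∈ Set.Ioo (x - ε) x := Set.OrdConnected.uIcc_subset Set.ordConnected_Ioo hy
      ⟨by linarith, by linarith⟩ ht
    exact hε' t (by rw [abs_lt]; constructor <;> linarith [this.1, this.2]) (ne_of_lt this.2)
  · intro hx
    filter_upwards [Ioo_mem_nhds (show x - ε < x by linarith) (show x < x + ε by linarith)] with y hy
    refine hH' _ _ fun t ht => ?_
    have : t ∈ Set.Ioo (x - ε) (x + ε) := Set.OrdConnected.uIcc_subset Set.ordConnected_Ioo hy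
      ⟨by linarith, by linarith⟩ ht
    by_cases htx : t = x
    · rwa [htx]
    · exact hε' t (by rw [abs_lt]; constructor <;> linarith [this.1, this.2]) htx

variable {ι : Type} [Fintype ι]

theorem Slit_log (z : ι → ℂ) (ε : ℝ) (a : ℂ) (ha : a = ε * Complex.I) (hε : ε ≠ 0) (i : ι)
    (γ : C(I, Punc z)) (hγ : ∀ t, γ t ∈ Slit z ε) :
    wind (fun t => (γ t).1 - z i) =
      (Complex.log (a * ((γ 1).1 - z i)) - Complex.log a) -
      (Complex.log (a * ((γ 0).1 - z i)) - Complex.log a) := by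
  have a0 : a ≠ 0 := by rw [ha]; simp [hε]
  have hs : ∀ t, a * ((γ t).1 - z i) ∈ Complex.slitPlane := by
    intro t
    rw [Complex.mem_slitPlane_iff, ha]
    by_cases h : (γ t).1.re = (z i).re
    · left; have := hγ t i h; simp; nlinarith
    · right; simp [hε, sub_eq_zero, h]
  exact wind_eq _ (fun t => Complex.log (a * ((γ t).1 - z i)) - Complex.log a)
    (by
      refine Continuous.sub ?_ continuous_const
      exact Continuous.clog (by fun_prop) hs) (fun t => by
      rw [Complex.exp_sub, Complex.exp_log (Complex.slitPlane_ne_zero (hs t)), Complex.exp_log a0]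
      field_simp)

theorem plane_span_re (z : ι → ℂ) (hz : Function.Injective (fun i => (z i).re))
    {φ : C(I, Punc z) → ℂ} (h : IsCocycle φ) :
    ∃ c : ι → ℂ, ∀ γ, γ 0 = γ 1 → φ γ = ∑ i, c i * wind (fun t => (γ t).1 - z i) := by
  classical
  obtain ⟨f1, hf1⟩ := h.exists_primitive_on (Slit z 1) (Slit_loop z 1 one_ne_zero h)
  obtain ⟨f2, hf2⟩ := h.exists_primitive_on (Slit z (-1)) (Slit_loop z (-1) (by norm_num) h)
  let E : Set ℝ := Set.range (fun i => (z i).re)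
  have hE : E.Finite := Set.finite_range _
  have memP : ∀ u : ℂ, u.re ∉ E → ∀ i, u ≠ z i := fun u hu i hi => hu ⟨i, by rw [hi]⟩
  have memS : ∀ ε (u : Punc z), u.1.re ∉ E → u ∈ Slit z ε := fun ε u hu i hi => (hu ⟨i, hi.symm⟩).elim
  -- difference equality along segments avoiding E
  have seg : ∀ u v : Punc z, (∀ t : I, ((1 - t) * u.1.re + t * v.1.re) ∉ E) →
      f1 u - f2 u = f1 v - f2 v := by
    intro u v huv
    have hm : ∀ t : I, ((1 - (t:ℝ) : ℝ) * u.1 + (t : ℝ) * v.1 : ℂ).re ∉ E := by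
      intro t; simpa using huv t
    let γ : C(I, Punc z) := ⟨fun t => ⟨(1 - (t:ℝ) : ℝ) * u.1 + (t : ℝ) * v.1, memP _ (hm t)⟩,
      by fun_prop⟩
    have g0 : γ 0 = u := by apply Subtype.ext; simp [γ]
    have g1 : γ 1 = v := by apply Subtype.ext; simp [γ]
    have h1 := hf1 γ (fun t => memS _ _ (hm t))
    have h2 := hf2 γ (fun t => memS _ _ (hm t))
    rw [g0, g1] at h1 h2
    linear_combination h1 - h2
  let H : ℝ → ℂ := fun x => if hx : x ∉ E then
    f1 ⟨x, memP _ (by simpa using hx)⟩ - f2 ⟨x, memP _ (by simpa using hx)⟩ else 0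
  have hHu : ∀ u : Punc z, u.1.re ∉ E → f1 u - f2 u = H u.1.re := by
    intro u hu
    simp only [H, dif_pos hu]
    refine seg _ _ fun t => ?_
    simp only [Complex.ofReal_re]
    convert hu using 1; ring
  have hH : ∀ x y, x ≤ y → (∀ t ∈ Set.Icc x y, t ∉ E) → H x = H y := by
    intro x y hxy ht
    simp only [H, dif_pos (ht x ⟨le_rfl, hxy⟩), dif_pos (ht y ⟨hxy, le_rfl⟩)]
    refine seg _ _ fun t => ht _ ?_
    have := t.2
    simp only [Complex.ofReal_re]
    constructor <;> nlinarith [this.1, this.2]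
  have hev := eventually_const_of_locconst E hE H hH
  choose hp hhp using fun x => (hev x).1
  choose hm hhm using fun x => (hev x).2.1
  have hloc := fun x => (hev x).2.2
  have hpi : (2 * Real.pi * Complex.I : ℂ) ≠ 0 := by simp [Real.pi_ne_zero]
  let c : ι → ℂ := fun i => (hp (z i).re - hm (z i).re) / (2 * Real.pi * Complex.I)
  let D : ι → ℝ → ℂ := fun i x => if 0 < x - (z i).re then 0 else - (2 * Real.pi * Complex.I)
  have hD : ∀ i x, x ≠ (z i).re → ∀ᶠ y in 𝓝 x, D i y = D i x := by
    intro i x hx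
    rcases lt_or_gt_of_ne hx with hx | hx
    · filter_upwards [gt_mem_nhds hx] with y hy
      simp only [D]; rw [if_neg (by linarith), if_neg (by linarith)]
    · filter_upwards [lt_mem_nhds hx] with y hy
      simp only [D]; rw [if_pos (by linarith), if_pos (by linarith)]
  let k : ℝ → ℂ := fun x => H x - ∑ i, c i * D i x
  have k2 : ∀ x ∉ E, ∀ᶠ y in 𝓝 x, k y = k x := by
    intro x hx
    have : ∀ᶠ y in 𝓝 x, ∀ i, D i y = D i x := by
      rw [eventually_all]; exact fun i => hD i x fun hi => hx ⟨i, hi.symm⟩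
    filter_upwards [this, hloc x hx] with y hy1 hy2
    simp only [k, hy2]
    congr 1; exact Finset.sum_congr rfl fun i _ => by rw [hy1]
  have k1 : ∀ x, ∃ v, ∀ᶠ y in 𝓝[≠] x, k y = v := by
    intro x
    by_cases hx : x ∈ E
    · obtain ⟨i, rfl⟩ := hx
      simp only
      have h0 : ∀ᶠ y in 𝓝 (z i).re, ∀ j, j ≠ i → D j y = D j (z i).re := by
        rw [eventually_all]; intro j
        by_cases hj : j = i
        · simp [hj]
        · filter_upwards [hD j (z i).re (fun e => hj (hz e.symm))] with y hy _ using hy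
      refine ⟨hp (z i).re - ∑ j ∈ Finset.univ.erase i, c j * D j (z i).re, ?_⟩
      have ks : ∀ y, k y = H y - ∑ j ∈ Finset.univ.erase i, c j * D j y - c i * D i y := by
        intro y; simp only [k]; rw [← Finset.sum_erase_add _ _ (Finset.mem_univ i)]; ring
      rw [← nhdsLT_sup_nhdsGT, eventually_sup]
      constructor
      · filter_upwards [hhm (z i).re, h0.filter_mono nhdsWithin_le_nhds, self_mem_nhdsWithin]
          with y h1 h2 h3
        rw [ks, h1, Finset.sum_congr rfl fun j hj => by rw [h2 j (Finset.ne_of_mem_erase hj)]]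
        simp only [D, c]
        rw [if_neg (by simp only [Set.mem_Iio] at h3; linarith)]
        field_simp
        ring
      · filter_upwards [hhp (z i).re, h0.filter_mono nhdsWithin_le_nhds, self_mem_nhdsWithin]
          with y h1 h2 h3
        rw [ks, h1, Finset.sum_congr rfl fun j hj => by rw [h2 j (Finset.ne_of_mem_erase hj)]]
        simp only [D, c]
        rw [if_pos (by simp only [Set.mem_Ioi] at h3; linarith)]
        ring
    · exact ⟨k x, (k2 x hx).filter_mono nhdsWithin_le_nhds⟩
  obtain ⟨κ, hκ⟩ := const_off E k k1 k2
  refine ⟨c, fun γ hγ => ?_⟩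
  let l1 : ι → Punc z → ℂ := fun i u => Complex.log (Complex.I * (u.1 - z i)) - Complex.log Complex.I
  let l2 : ι → Punc z → ℂ := fun i u => Complex.log (-Complex.I * (u.1 - z i)) - Complex.log (-Complex.I)
  let ψ : C(I, Punc z) → ℂ := fun γ => φ γ - ∑ i, c i * wind (fun t => (γ t).1 - z i)
  have hψ : IsCocycle ψ := h.sub (IsCocycle.sum _ fun i _ => (wind_cocycle (fun u : Punc z => u.1 - z i)
    (by fun_prop) (fun u => sub_ne_zero.2 (u.2 i))).smul (c i))
  let g : Punc z → ℂ := fun u => if u ∈ Slit z 1 then f1 u - ∑ i, c i * l1 i u else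
    f2 u - ∑ i, c i * l2 i u + κ
  have hg2 : ∀ u ∈ Slit z (-1), g u = f2 u - ∑ i, c i * l2 i u + κ := by
    intro u hu
    by_cases hu1 : u ∈ Slit z 1
    · have huE : u.1.re ∉ E := by
        rintro ⟨i, hi⟩
        have a1 := hu i hi.symm
        have a2 := hu1 i hi.symm
        linarith
      have e1 := hHu u huE
      have e2 := hκ _ huE
      have e3 : ∀ i, l1 i u - l2 i u = D i u.1.re := by
        intro i
        have := log_diff (u.1 - z i) (by
          rw [Complex.sub_re, sub_ne_zero]; exact fun e => huE ⟨i, e.symm⟩)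
        simpa [l1, l2, D] using this
      have e4 : ∑ i, c i * D i u.1.re = ∑ i, c i * l1 i u - ∑ i, c i * l2 i u := by
        rw [← Finset.sum_sub_distrib]
        exact Finset.sum_congr rfl fun i _ => by rw [← e3]; ring
      simp only [g, if_pos hu1]
      simp only [k] at e2
      linear_combination e1 + e2 + e4
    · simp only [g, if_neg hu1]
  have := hψ.glue (fun b : Bool => if b then Slit z 1 else Slit z (-1))
    (by intro b; cases b <;> simp [isOpen_Slit]) (by
      intro u
      by_cases hu1 : u ∈ Slit z 1
      · exact ⟨true, by simpa using hu1⟩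
      · refine ⟨false, ?_⟩
        simp only [Slit, Set.mem_ofPred_eq, not_forall] at hu1
        obtain ⟨i, hi, hlt⟩ := hu1
        simp only [Bool.false_eq_true, if_false]
        intro j hj
        have hji : j = i := hz (hj.symm.trans hi)
        subst hji
        have hne : u.1.im ≠ (z j).im := fun e => u.2 j (Complex.ext hj e)
        rcases lt_or_gt_of_ne hne with h1 | h1
        · exact absurd (by linarith) hlt
        · linarith) g (by
      intro b γ hb
      cases b
      · simp only [Bool.false_eq_true, if_false] at hb
        rw [hg2 _ (hb 0), hg2 _ (hb 1)]
        simp only [ψ]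
        rw [hf2 γ hb, Finset.sum_congr rfl fun i _ => by
          rw [Slit_log z (-1) (-Complex.I) (by push_cast; ring) (by norm_num) i γ hb]]
        simp only [mul_sub, Finset.sum_sub_distrib, l2]
        ring
      · simp only [if_true] at hb
        simp only [g, if_pos (hb 0), if_pos (hb 1)]
        simp only [ψ]
        rw [hf1 γ hb, Finset.sum_congr rfl fun i _ => by
          rw [Slit_log z 1 (Complex.I) (by push_cast; ring) (by norm_num) i γ hb]]
        simp only [mul_sub, Finset.sum_sub_distrib, l1]
        ring) γ
  rw [hγ, sub_self] at this
  exact sub_eq_zero.1 this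

end plane2

section plane3

variable {ι : Type} [Fintype ι]

theorem exists_rot (z : ι → ℂ) (hz : Function.Injective z) :
    ∃ d : ℂ, d ≠ 0 ∧ Function.Injective (fun i => (d * z i).re) := by
  let B : Set ℝ := Set.range (fun x : ι × ι => (z x.1 - z x.2).re / (z x.1 - z x.2).im)
  have hB : B.Finite := Set.finite_range _
  obtain ⟨t, ht⟩ := hB.infinite_compl.nonempty
  refine ⟨⟨1, t⟩, fun e => by simpa using congrArg Complex.re e, fun i j hij => ?_⟩
  simp only [Complex.mul_re, one_mul] at hij
  have h1 : (z i - z j).re = t * (z i - z j).im := by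
    simp only [Complex.sub_re, Complex.sub_im]; linarith
  by_cases h0 : (z i - z j).im = 0
  · apply hz
    rw [← sub_eq_zero]
    apply Complex.ext
    · rw [h1, h0]; simp
    · exact h0
  · exact (ht ⟨(i, j), by simp only; rw [h1]; field_simp⟩).elim

theorem plane_span (z : ι → ℂ) (hz : Function.Injective z)
    {φ : C(I, Punc z) → ℂ} (h : IsCocycle φ) :
    ∃ c : ι → ℂ, ∀ γ, γ 0 = γ 1 → φ γ = ∑ i, c i * wind (fun t => (γ t).1 - z i) := by
  obtain ⟨d, hd, hdz⟩ := exists_rot z hz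
  let f : C(Punc (fun i => d * z i), Punc z) := ⟨fun u => ⟨u.1 / d, fun i hi => u.2 i (by
    simp only [← hi]; field_simp)⟩, by fun_prop⟩
  obtain ⟨c, hc⟩ := plane_span_re (fun i => d * z i) hdz (h.comp f)
  refine ⟨c, fun γ hγ => ?_⟩
  let γ' : C(I, Punc (fun i => d * z i)) := ⟨fun t => ⟨d * (γ t).1, fun i hi =>
    (γ t).2 i (mul_left_cancel₀ hd hi)⟩, by fun_prop⟩
  have e : f.comp γ' = γ := by
    ext t; simp [f, γ', hd]
  have := hc γ' (by apply Subtype.ext; simp [γ', hγ])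
  rw [e] at this
  rw [this]
  refine Finset.sum_congr rfl fun i _ => ?_
  have e2 : (fun t => (γ' t).1 - d * z i) = fun t => d * ((γ t).1 - z i) := by
    ext t; simp only [γ', ContinuousMap.coe_mk]; ring
  rw [e2, wind_mul (fun _ => d) _ continuous_const (by fun_prop) (fun _ => hd)
    (fun t => sub_ne_zero.2 ((γ t).2 i)), wind_const _ hd, zero_add]

/-- complement of the zeros of `∏ (1 - λ_i u)` -/
abbrev UU (lam : ι → ℂ) : Type := {u : ℂ // ∀ i, 1 - lam i * u ≠ 0}

theorem UU_span (lam : ι → ℂ) (hlam : Function.Injective lam)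
    {φ : C(I, UU lam) → ℂ} (h : IsCocycle φ) :
    ∃ c : ι → ℂ, ∀ γ, γ 0 = γ 1 → φ γ = ∑ i, c i * wind (fun t => 1 - lam i * (γ t).1) := by
  classical
  let J := {i // lam i ≠ 0}
  let z : J → ℂ := fun i => (lam i)⁻¹
  have hz : Function.Injective z := fun i j hij => Subtype.ext (hlam (inv_injective hij))
  let f : C(Punc z, UU lam) := ⟨fun u => ⟨u.1, fun i hi => by
    by_cases h0 : lam i = 0
    · simp [h0] at hi
    · exact u.2 ⟨i, h0⟩ (by simp only [z]; rw [sub_eq_zero] at hi; field_simp; rw [mul_comm]; exact hi.symm)⟩, by fun_prop⟩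
  obtain ⟨c, hc⟩ := plane_span z hz (h.comp f)
  refine ⟨fun i => if hi : lam i ≠ 0 then c ⟨i, hi⟩ else 0, fun γ hγ => ?_⟩
  let γ' : C(I, Punc z) := ⟨fun t => ⟨(γ t).1, fun i hi => (γ t).2 i (by
    rw [hi]; simp only [z]; rw [mul_inv_cancel₀ i.2, sub_self])⟩, by fun_prop⟩
  have e : f.comp γ' = γ := by
    ext t; simp [f, γ']
  have := hc γ' (by apply Subtype.ext; simp [γ', hγ])
  rw [e] at this
  rw [this]
  have e1 : ∑ i, (if hi : lam i ≠ 0 then c ⟨i, hi⟩ else 0) * wind (fun t => 1 - lam i * (γ t).1) =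
      ∑ i ∈ Finset.univ.filter (fun i => lam i ≠ 0),
        (if hi : lam i ≠ 0 then c ⟨i, hi⟩ else 0) * wind (fun t => 1 - lam i * (γ t).1) := by
    rw [Finset.sum_filter]
    refine Finset.sum_congr rfl fun i _ => ?_
    by_cases hi : lam i = 0 <;> simp [hi]
  rw [e1, ← Finset.sum_subtype_eq_sum_filter, Finset.subtype_univ]
  refine Finset.sum_congr rfl fun i _ => ?_
  rw [dif_pos i.2]
  congr 1
  have e2 : (fun t => 1 - lam i * (γ t).1) = fun t => (- lam i) * ((γ t).1 - z i) := by
    ext t; simp only [z]; field_simp [i.2]; ring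
  rw [e2, wind_mul (fun _ => - lam i) (fun t => (γ t).1 - z i) continuous_const (by fun_prop) (fun _ => neg_ne_zero.2 i.2)
    (fun t => sub_ne_zero.2 ((γ' t).2 i)), wind_const _ (neg_ne_zero.2 i.2), zero_add]
  rfl

end plane3

section averaging

theorem sum_shift (n : ℕ) (g : ℤ → ℂ) (hg : ∀ k, g (k + n) = g k) (m : ℤ) :
    ∑ k ∈ Finset.range n, g (k + m) = ∑ k ∈ Finset.range n, g k := by
  have step : ∀ m : ℤ, ∑ k ∈ Finset.range n, g (k + (m + 1)) = ∑ k ∈ Finset.range n, g (k + m) := by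
    intro m
    have h1 := Finset.sum_range_succ (fun k : ℕ => g (k + m)) n
    have h2 := Finset.sum_range_succ' (fun k : ℕ => g (k + m)) n
    have h3 : g ((n : ℤ) + m) = g (((0 : ℕ) : ℤ) + m) := by
      rw [add_comm, hg]; simp
    have h4 : ∑ k ∈ Finset.range n, g (k + (m + 1)) =
        ∑ k ∈ Finset.range n, g (((k + 1 : ℕ) : ℤ) + m) :=
      Finset.sum_congr rfl fun k _ => by congr 1; push_cast; ring
    rw [h4]
    rw [h1, h3] at h2
    exact (add_right_cancel h2).symm
  induction m using Int.induction_on with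
  | zero => simp
  | succ i ih => rw [step, ih]
  | pred i ih => rw [← ih, ← step]; simp

theorem periodic_int (n : ℕ) (g : ℤ → ℂ) (hg : ∀ k, g (k + n) = g k) (k m : ℤ)
    (hm : (n : ℤ) ∣ m) : g (k + m) = g k := by
  obtain ⟨c, rfl⟩ := hm
  induction c using Int.induction_on with
  | zero => simp
  | succ i ih => rw [← ih, ← hg (k + n * (i : ℤ))]; congr 1; ring
  | pred i ih => rw [← ih, ← hg (k + n * (-(i : ℤ) - 1))]; congr 1; ring

variable {A U : Type} [TopologicalSpace A] [TopologicalSpace U]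

/-- abstract infinite cyclic covering -/
structure IsCyc (s : ℤ → C(A, A)) (π : C(A, U)) : Prop where
  zero : ∀ a, s 0 a = a
  add : ∀ j k a, s (j + k) a = s j (s k a)
  lift : ∀ f : C(I × I, U), ∃ f' : C(I × I, A), ∀ x, π (f' x) = f x
  uniq : ∀ f f' : C(I, A), (∀ t, π (f t) = π (f' t)) → ∃ k, ∀ t, f t = s k (f' t)
  inv : ∀ k a, π (s k a) = π a

theorem IsCyc.lift_path {s : ℤ → C(A, A)} {π : C(A, U)} (h : IsCyc s π) (f : C(I, U)) :
    ∃ f' : C(I, A), ∀ x, π (f' x) = f x := by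
  obtain ⟨g, hg⟩ := h.lift ⟨fun x => f x.1, by fun_prop⟩
  exact ⟨⟨fun t => g (t, 0), by fun_prop⟩, fun x => hg _⟩

theorem IsCyc.fibre {s : ℤ → C(A, A)} {π : C(A, U)} (h : IsCyc s π) (a b : A) (hab : π a = π b) :
    ∃ k, a = s k b := by
  obtain ⟨k, hk⟩ := h.uniq (.const I a) (.const I b) (fun _ => hab)
  exact ⟨k, hk 0⟩

theorem avg_cocycle {s : ℤ → C(A, A)} {π : C(A, U)} (h : IsCyc s π) {Θ : C(I, A) → ℂ}
    (hΘ : IsCocycle Θ) (n : ℕ) (hper : ∀ α : C(I, A), Θ ((s n).comp α) = Θ α) :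
    ∃ ψ : C(I, U) → ℂ, IsCocycle ψ ∧
      ∀ α : C(I, A), ψ (π.comp α) = (1 / n : ℂ) * ∑ k ∈ Finset.range n, Θ ((s k).comp α) := by
  choose lft hlft using h.lift_path
  have hadd : ∀ j k (α : C(I, A)), (s (j + k)).comp α = (s j).comp ((s k).comp α) := by
    intro j k α; ext t; exact h.add j k _
  let av : C(I, A) → ℂ := fun α => (1 / n : ℂ) * ∑ k ∈ Finset.range n, Θ ((s k).comp α)
  have hav : ∀ j α, av ((s j).comp α) = av α := by
    intro j α
    simp only [av]
    congr 1
    rw [← sum_shift n (fun k => Θ ((s k).comp α)) _ j]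
    · exact Finset.sum_congr rfl fun k _ => by rw [hadd]
    · intro k; rw [add_comm, hadd, hper]
  have key : ∀ (α : C(I, A)) (γ : C(I, U)), (∀ t, π (α t) = γ t) → av (lft γ) = av α := by
    intro α γ hα
    obtain ⟨j, hj⟩ := h.uniq (lft γ) α (fun t => by rw [hlft, hα])
    have : lft γ = (s j).comp α := by ext t; exact hj t
    rw [this, hav]
  have havc : IsCocycle av :=
    (IsCocycle.sum (Finset.range n) fun k _ => hΘ.comp (s (k : ℤ))).smul (1 / n : ℂ)
  refine ⟨fun γ => av (lft γ), ⟨fun x => ?_, fun f => ?_⟩, fun α => ?_⟩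
  · rw [key (.const I (lft (.const I x) 0)) _ (fun t => by
      rw [ContinuousMap.const_apply, hlft]; rfl), havc.const]
  · obtain ⟨f', hf'⟩ := h.lift f
    refine Eq.trans ?_ ((havc.square f').trans ?_)
    · exact congrArg₂ (· + ·) (key _ _ (fun t => hf' (t, 0))) (key _ _ (fun t => hf' (1, t)))
    · exact congrArg₂ (· + ·) (key _ _ (fun t => hf' (0, t))).symm
        (key _ _ (fun t => hf' (t, 1))).symm
  · exact key α _ (fun t => rfl)

variable {B V X : Type} [TopologicalSpace B] [TopologicalSpace V] [TopologicalSpace X]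

theorem product_decomp [PathConnectedSpace A] [PathConnectedSpace B]
    {sA : ℤ → C(A, A)} {πA : C(A, U)} (hA : IsCyc sA πA)
    {sB : ℤ → C(B, B)} {πB : C(B, V)} (hB : IsCyc sB πB)
    (pt : C(A × B, X)) (n : ℕ) (hn : n ≠ 0)
    (hpt : ∀ k a b, pt (sA k a, b) = pt (a, sB k b))
    (hptn : ∀ a b, pt (sA n a, b) = pt (a, b))
    {φ : C(I, X) → ℂ} (hφ : IsCocycle φ) :
    ∃ (ψ : C(I, U) → ℂ) (χ : C(I, V) → ℂ), IsCocycle ψ ∧ IsCocycle χ ∧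
      ∀ (α : C(I, A)) (β : C(I, B)) (a b : ℤ), α 1 = sA a (α 0) → β 1 = sB b (β 0) →
        (n : ℤ) ∣ a + b → φ (pt.comp (α.prodMk β)) = ψ (πA.comp α) + χ (πB.comp β) := by
  let Φ : C(I, A) → C(I, B) → ℂ := fun α β => φ (pt.comp (α.prodMk β))
  have comm : ∀ (α : C(I, A)) (β : C(I, B)) (x x' : A) (y y' : B), α 0 = x → α 1 = x' →
      β 0 = y → β 1 = y' →
      Φ α (.const I y) + Φ (.const I x') β = Φ (.const I x) β + Φ α (.const I y') := by
    rintro α β _ _ _ _ rfl rfl rfl rfl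
    exact hφ.sq (fun z => pt (α z.1, β z.2)) (by fun_prop) _ _ _ _ (fun t => rfl) (fun t => rfl)
      (fun t => rfl) (fun t => rfl)
  have diag : ∀ (α : C(I, A)) (β : C(I, B)),
      Φ α β = Φ α (.const I (β 0)) + Φ (.const I (α 1)) β := by
    intro α β
    have := hφ.sq (fun z => pt (α z.1, β (z.1 * z.2))) (by fun_prop)
      (pt.comp (α.prodMk (.const I (β 0)))) (pt.comp ((ContinuousMap.const I (α 1)).prodMk β))
      (.const I (pt (α 0, β 0))) (pt.comp (α.prodMk β)) (fun t => by simp) (fun t => by simp)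
      (fun t => by simp) (fun t => by simp)
    rw [hφ.const, zero_add] at this
    exact this.symm
  have move : ∀ k α β, Φ ((sA k).comp α) β = Φ α ((sB k).comp β) := by
    intro k α β
    simp only [Φ]; congr 1; ext t; exact hpt k _ _
  have per : ∀ α β, Φ ((sA n).comp α) β = Φ α β := by
    intro α β
    simp only [Φ]; congr 1; ext t; exact hptn _ _
  have hAadd : ∀ j k (α : C(I, A)), (sA (j + k)).comp α = (sA j).comp ((sA k).comp α) := by
    intro j k α; ext t; exact hA.add j k _
  have hBadd : ∀ j k (α : C(I, B)), (sB (j + k)).comp α = (sB j).comp ((sB k).comp α) := by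
    intro j k α; ext t; exact hB.add j k _
  have cA : ∀ k x, (sA k).comp (.const I x) = .const I (sA k x) := fun _ _ => rfl
  have cB : ∀ k x, (sB k).comp (.const I x) = .const I (sB k x) := fun _ _ => rfl
  have per' : ∀ α β k, Φ ((sA (k + n)).comp α) β = Φ ((sA k).comp α) β := by
    intro α β k; rw [add_comm, hAadd, per]
  -- averages
  let avA : C(I, A) → B → ℂ := fun α y => ∑ k ∈ Finset.range n, Φ ((sA k).comp α) (.const I y)
  let avB : A → C(I, B) → ℂ := fun x β => ∑ k ∈ Finset.range n, Φ (.const I (sA k x)) β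
  have avBs : ∀ x j β, avB (sA j x) β = avB x β := by
    intro x j β
    simp only [avB]
    rw [← sum_shift n (fun k => Φ (.const I (sA k x)) β) (fun k => by
      rw [← cA, per', cA]) j]
    exact Finset.sum_congr rfl fun k _ => by rw [hA.add]
  have avAs : ∀ y j α, avA α (sB j y) = avA α y := by
    intro y j α
    simp only [avA]
    rw [← sum_shift n (fun k => Φ ((sA k).comp α) (.const I y)) (fun k => per' _ _ _) j]
    refine Finset.sum_congr rfl fun k _ => ?_
    rw [← cB, ← move, ← hAadd, add_comm]
  have avA_ind : ∀ α a, α 1 = sA a (α 0) → ∀ y y', avA α y = avA α y' := by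
    intro α a hα y y'
    let β := (PathConnectedSpace.somePath y y').toContinuousMap
    have : avA α y + avB (α 1) β = avB (α 0) β + avA α y' := by
      simp only [avA, avB]
      rw [← Finset.sum_add_distrib, ← Finset.sum_add_distrib]
      exact Finset.sum_congr rfl fun k _ => comm _ β _ _ _ _ rfl rfl (by simp [β]) (by simp [β])
    rw [hα, avBs] at this
    linear_combination this
  have avB_ind : ∀ β b, β 1 = sB b (β 0) → ∀ x x', avB x β = avB x' β := by
    intro β b hβ x x'
    let α := (PathConnectedSpace.somePath x x').toContinuousMap
    have : avA α (β 0) + avB x' β = avB x β + avA α (β 1) := by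
      simp only [avA, avB]
      rw [← Finset.sum_add_distrib, ← Finset.sum_add_distrib]
      exact Finset.sum_congr rfl fun k _ => comm _ β _ _ _ _ (by simp [α]) (by simp [α]) rfl rfl
    rw [hβ, avAs] at this
    linear_combination -this
  have main : ∀ (α : C(I, A)) (β : C(I, B)) (a b : ℤ), α 1 = sA a (α 0) → β 1 = sB b (β 0) →
        (n : ℤ) ∣ a + b → n * Φ α β = avA α (β 0) + avB (α 1) β := by
    intro α β a b hα hβ hab
    let x := α 0
    let y := β 0
    let α0 := (PathConnectedSpace.somePath x (sA 1 x)).toContinuousMap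
    let β0 := (PathConnectedSpace.somePath y (sB 1 y)).toContinuousMap
    have α00 : α0 0 = x := by simp [α0]
    have α01 : α0 1 = sA 1 x := by simp [α0]
    have β00 : β0 0 = y := by simp [β0]
    have β01 : β0 1 = sB 1 y := by simp [β0]
    let fa : ℤ → ℂ := fun k => Φ ((sA k).comp α) (.const I y)
    let fb : ℤ → ℂ := fun k => Φ (.const I (sA k x)) β
    let A0 : ℤ → ℂ := fun k => Φ ((sA k).comp α0) (.const I y)
    let B0 : ℤ → ℂ := fun k => Φ (.const I (sA k x)) β0
    have sh : ∀ k j (δ : C(I, A)), Φ ((sA k).comp δ) (.const I (sB j y)) =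
        Φ ((sA (k + j)).comp δ) (.const I y) := by
      intro k j δ; rw [← cB, ← move, ← hAadd, add_comm]
    have r1 : ∀ k, fa k + B0 (k + a) = B0 k + fa (k + 1) := by
      intro k
      have := comm ((sA k).comp α) β0 (sA k x) (sA (k + a) x) y (sB 1 y) rfl (by
        rw [hA.add, ← hα]; rfl) β00 β01
      rw [sh] at this
      exact this
    have r2 : ∀ k, A0 k + fb (k + 1) = fb k + A0 (k + b) := by
      intro k
      have := comm ((sA k).comp α0) β (sA k x) (sA (k + 1) x) y (sB b y)
        (by rw [ContinuousMap.comp_apply, α00])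
        (by rw [hA.add, ContinuousMap.comp_apply, α01]) rfl hβ
      rw [sh] at this
      exact this
    have r3 : ∀ k, A0 k + B0 (k + 1) = B0 k + A0 (k + 1) := by
      intro k
      have := comm ((sA k).comp α0) β0 (sA k x) (sA (k + 1) x) y (sB 1 y)
        (by rw [ContinuousMap.comp_apply, α00])
        (by rw [hA.add, ContinuousMap.comp_apply, α01]) β00 β01
      rw [sh] at this
      exact this
    have r4 : ∀ k, A0 k - B0 k = A0 0 - B0 0 := by
      intro k
      induction k using Int.induction_on with
      | zero => rfl
      | succ i ih => linear_combination ih - r3 i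
      | pred i ih =>
        have := r3 (-(i : ℤ) - 1)
        rw [sub_add_cancel] at this
        linear_combination ih + this
    have r5 : ∀ k, B0 (k + (a + b)) = B0 k := fun k =>
      periodic_int n B0 (fun k => by
        simp only [B0]; rw [← cA, per', cA]) k _ hab
    let T : ℤ → ℂ := fun k => fa k + fb (k + a)
    have r6 : ∀ k, T (k + 1) = T k := by
      intro k
      have h1 := r1 k
      have h2 := r2 (k + a)
      have h3 := r4 (k + a)
      have h4 := r4 (k + a + b)
      have h5 := r5 k
      rw [← add_assoc] at h5
      have e : k + 1 + a = k + a + 1 := by ring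
      simp only [T, e]
      linear_combination -h1 - h3 + h2 + h4 + h5
    have r7 : ∀ k : ℕ, T k = T 0 := by
      intro k
      induction k with
      | zero => rfl
      | succ i ih => rw [← ih, ← r6 i]; push_cast; rfl
    have r8 : T 0 = Φ α β := by
      rw [diag]
      simp only [T, fa, fb]
      have : (sA 0).comp α = α := by ext t; exact hA.zero _
      rw [this, zero_add, ← hα]
    have r9 : ∑ k ∈ Finset.range n, T k = n * Φ α β := by
      rw [Finset.sum_congr rfl fun k _ => r7 k, r8]; simp
    rw [← r9]
    simp only [T, Finset.sum_add_distrib, avA, avB]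
    congr 1
    exact Finset.sum_congr rfl fun k _ => by simp only [fb]; rw [hA.add, ← hα]
  obtain ⟨x0⟩ : Nonempty A := inferInstance
  obtain ⟨y0⟩ : Nonempty B := inferInstance
  obtain ⟨ψ, hψ, hψ'⟩ := avg_cocycle hA (Θ := fun α => Φ α (.const I y0))
    (hφ.comp (pt.comp ((ContinuousMap.id A).prodMk (.const A y0)))) n (fun α => per _ _)
  obtain ⟨χ, hχ, hχ'⟩ := avg_cocycle hB (Θ := fun β => Φ (.const I x0) β)
    (hφ.comp (pt.comp ((ContinuousMap.const B x0).prodMk (.id B)))) n (fun β => by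
      rw [← move, per])
  refine ⟨ψ, χ, hψ, hχ, fun α β a b hα hβ hab => ?_⟩
  have e1 := main α β a b hα hβ hab
  rw [avA_ind α a hα _ y0, avB_ind β b hβ _ x0] at e1
  have e2 : avB x0 β = ∑ k ∈ Finset.range n, Φ (.const I x0) ((sB k).comp β) := by
    simp only [avB]
    exact Finset.sum_congr rfl fun k _ => by rw [← move, cA]
  rw [hψ', hχ', ← e2]
  have hn' : (n : ℂ) ≠ 0 := Nat.cast_ne_zero.2 hn
  change Φ α β = _
  field_simp
  rw [mul_comm]
  exact e1

end averaging

section covering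

variable {ι : Type} [Fintype ι]

/-- circle around a zero, with logarithms of all factors -/
theorem exists_circle [DecidableEq ι] (lam : ι → ℂ) (hlam : Function.Injective lam) (i : ι) (hi : lam i ≠ 0) :
    ∃ (u : ℝ → ℂ) (L : ι → ℝ → ℂ), Continuous u ∧ (∀ k, Continuous (L k)) ∧
      (∀ k t, Complex.exp (L k t) = 1 - lam k * u t) ∧ (∀ m : ℕ, u m = u 0) ∧
      ∀ k (m : ℕ), L k m = L k 0 + if k = i then m * (2 * Real.pi * Complex.I) else 0 := by
  let c : ι → ℂ := fun k => 1 - lam k / lam i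
  have hc : ∀ k, k ≠ i → c k ≠ 0 := by
    intro k hk h
    apply hk; apply hlam
    simp only [c] at h
    rw [sub_eq_zero, eq_div_iff hi, one_mul] at h
    exact h.symm
  let κ : ι → ℂ := fun k => (lam k / lam i) / c k
  obtain ⟨M, hM⟩ := (Set.finite_range (fun k => ‖κ k‖)).bddAbove
  have hM' : ∀ k, ‖κ k‖ ≤ M := fun k => hM ⟨k, rfl⟩
  let r : ℝ := 1 / (|M| + 1)
  have hr : 0 < r := by positivity
  let e : ℝ → ℂ := fun t => Complex.exp (2 * Real.pi * Complex.I * t)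
  have he : Continuous e := by fun_prop
  have hen : ∀ t, ‖e t‖ = 1 := by
    intro t
    have : (2 * Real.pi * Complex.I * t : ℂ) = ((2 * Real.pi * t : ℝ) : ℂ) * Complex.I := by
      push_cast; ring
    simp only [e]; rw [this, Complex.norm_exp_ofReal_mul_I]
  have he0 : ∀ m : ℕ, e m = 1 := by
    intro m
    have : (2 * Real.pi * Complex.I * ((m : ℝ) : ℂ) : ℂ) = m * (2 * Real.pi * Complex.I) := by
      push_cast; ring
    simp only [e]; rw [this, Complex.exp_nat_mul_two_pi_mul_I]
  have he00 : e 0 = 1 := by simpa using he0 0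
  have hsm : ∀ k t, 1 + κ k * (r * e t) ∈ Complex.slitPlane := by
    intro k t
    apply Complex.mem_slitPlane_of_norm_lt_one
    rw [norm_mul, norm_mul, hen, mul_one, Complex.norm_real, Real.norm_of_nonneg hr.le]
    have : ‖κ k‖ < |M| + 1 := by linarith [hM' k, le_abs_self M]
    simp only [r]
    rw [mul_one_div, div_lt_one (by positivity)]; exact this
  refine ⟨fun t => (1 - r * e t) / lam i, fun k t => if k = i then Real.log r + 2 * Real.pi * Complex.I * t
    else Complex.log (c k) + Complex.log (1 + κ k * (r * e t)), by fun_prop, ?_, ?_, ?_, ?_⟩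
  · intro k
    by_cases hk : k = i <;> simp only [hk, if_true, if_false]
    · fun_prop
    · exact continuous_const.add (Continuous.clog (by fun_prop) (hsm k))
  · intro k t
    by_cases hk : k = i <;> simp only [hk, if_true, if_false]
    · subst hk
      rw [Complex.exp_add, ← Complex.ofReal_exp, Real.exp_log hr]
      field_simp
      simp [e]
    · rw [Complex.exp_add, Complex.exp_log (hc k hk), Complex.exp_log (Complex.slitPlane_ne_zero (hsm k t))]
      simp only [κ]
      have := hc k hk
      have h2 : c k * (1 + lam k / lam i / c k * (r * e t)) = c k + lam k / lam i * (r * e t) := by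
        field_simp
      rw [h2]
      simp only [c]
      ring
  · intro m; simp only [he0, he00]
  · intro k m
    by_cases hk : k = i <;> simp only [hk, if_true, if_false]
    · push_cast; ring
    · simp only [he0, he00]; ring

/-- infinite cyclic covering of `UU lam` -/
abbrev Cov (lam : ι → ℂ) : Type := {x : ℂ × ℂ // Complex.exp x.1 = ∏ i, (1 - lam i * x.2)}

/-- deck transformation -/
noncomputable def Cov.sh (lam : ι → ℂ) (k : ℤ) : C(Cov lam, Cov lam) :=
  ⟨fun x => ⟨(x.1.1 + k * (2 * Real.pi * Complex.I), x.1.2), by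
    simp only [Complex.exp_add, Complex.exp_int_mul_two_pi_mul_I, mul_one]; exact x.2⟩, by fun_prop⟩

/-- projection -/
def Cov.pr (lam : ι → ℂ) : C(Cov lam, UU lam) :=
  ⟨fun x => ⟨x.1.2, fun i => by
    have := Complex.exp_ne_zero x.1.1
    rw [x.2, Finset.prod_ne_zero_iff] at this
    exact this i (Finset.mem_univ _)⟩, by fun_prop⟩

theorem Cov.isCyc (lam : ι → ℂ) : IsCyc (Cov.sh lam) (Cov.pr lam) where
  zero a := by apply Subtype.ext; simp [Cov.sh]
  add j k a := by
    apply Subtype.ext; simp only [Cov.sh, ContinuousMap.coe_mk]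
    ext1
    · push_cast; ring
    · rfl
  lift f := by
    obtain ⟨L, hL, e⟩ := exists_log_sq (fun x => ∏ i, (1 - lam i * (f x).1)) (by fun_prop)
      (fun x => Finset.prod_ne_zero_iff.2 fun i _ => (f x).2 i)
    exact ⟨⟨fun x => ⟨(L x, (f x).1), e x⟩, by fun_prop⟩, fun x => rfl⟩
  uniq f f' h := by
    have h' : ∀ t, (f t).1.2 = (f' t).1.2 := fun t => congrArg Subtype.val (h t)
    obtain ⟨n, hn⟩ := log_unique (fun t => (f t).1.1) (fun t => (f' t).1.1) (by fun_prop)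
      (by fun_prop) (fun t => by rw [(f t).2, (f' t).2, h'])
    exact ⟨n, fun t => Subtype.ext (Prod.ext (hn t) (h' t))⟩
  inv k a := rfl

theorem UU_pathConnected (lam : ι → ℂ) : PathConnectedSpace (UU lam) := by
  have hfin : {u : ℂ | ∀ i, 1 - lam i * u ≠ 0}ᶜ.Finite := by
    refine (Set.finite_range (fun i => (lam i)⁻¹)).subset fun u hu => ?_
    simp only [Set.mem_compl_iff, Set.mem_ofPred_eq, not_forall, not_not] at hu
    obtain ⟨i, hi⟩ := hu
    have h1 : lam i * u = 1 := (sub_eq_zero.1 hi).symm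
    exact ⟨i, (eq_inv_of_mul_eq_one_right h1).symm⟩
  have := hfin.countable.isPathConnected_compl_of_one_lt_rank (by
    rw [Complex.rank_real_complex]; norm_num)
  rw [compl_compl] at this
  exact isPathConnected_iff_pathConnectedSpace.1 this

theorem Cov_pathConnected (lam : ι → ℂ) (hlam : Function.Injective lam) (i : ι) (hi : lam i ≠ 0) :
    PathConnectedSpace (Cov lam) := by
  classical
  have hC := Cov.isCyc lam
  have := UU_pathConnected lam
  have shj : ∀ k x y, Joined x y → Joined (Cov.sh lam k x) (Cov.sh lam k y) := fun k x y h =>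
    ⟨h.somePath.map (Cov.sh lam k).continuous⟩
  -- every point can be joined to the fibre over any other
  have toFib : ∀ x y : Cov lam, ∃ k, Joined x (Cov.sh lam k y) := by
    intro x y
    obtain ⟨f, hf⟩ := hC.lift_path (PathConnectedSpace.somePath (Cov.pr lam x) (Cov.pr lam y)).toContinuousMap
    obtain ⟨j, hj⟩ := hC.fibre (f 0) x (by rw [hf]; simp)
    obtain ⟨k, hk⟩ := hC.fibre (f 1) y (by rw [hf]; simp)
    have h1 : Joined (f 0) (f 1) := ⟨⟨f, rfl, rfl⟩⟩
    rw [hj, hk] at h1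
    have h2 := shj (-j) _ _ h1
    rw [← hC.add, ← hC.add, neg_add_cancel, hC.zero] at h2
    exact ⟨_, h2⟩
  obtain ⟨u, L, hu, hL, hexp, hum, hLm⟩ := exists_circle lam hlam i hi
  let G : ℝ → Cov lam := fun t => ⟨(∑ k, L k t, u t), by
    simp only [Complex.exp_sum, hexp]⟩
  have hG : Continuous G := by fun_prop
  have h0 : Joined (G 0) (Cov.sh lam 1 (G 0)) := by
    refine ⟨⟨⟨fun t => G t, by fun_prop⟩, by simp, ?_⟩⟩
    apply Subtype.ext
    simp only [G, Cov.sh, ContinuousMap.coe_mk, Set.Icc.coe_one]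
    ext1
    · have := fun k => hLm k 1
      simp only [Nat.cast_one] at this
      simp only [this, Finset.sum_add_distrib]
      simp
    · have := hum 1; simpa using this
  have h1 : ∀ x, Joined x (Cov.sh lam 1 x) := by
    intro x
    obtain ⟨k, hk⟩ := toFib x (G 0)
    have h2 := shj 1 _ _ hk
    have h3 := shj k _ _ h0
    rw [← hC.add, add_comm] at h2
    rw [← hC.add] at h3
    exact (hk.trans h3).trans h2.symm
  have h2 : ∀ k x, Joined x (Cov.sh lam k x) := by
    intro k x
    induction k using Int.induction_on with
    | zero => rw [hC.zero]
    | succ i ih =>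
      have := h1 (Cov.sh lam i x)
      rw [← hC.add, add_comm] at this
      exact ih.trans this
    | pred i ih =>
      have := h1 (Cov.sh lam (-(i:ℤ) - 1) x)
      rw [← hC.add, add_sub_cancel] at this
      exact ih.trans this.symm
  refine ⟨⟨G 0⟩, fun x y => ?_⟩
  obtain ⟨k, hk⟩ := toFib x y
  exact hk.trans (h2 k y).symm

end covering

section fibre

variable {p q : ℕ} {lam : Fin p → ℂ} {mu : Fin q → ℂ}

theorem prod_scale {p : ℕ} (lam : Fin p → ℂ) (a u : ℂ) :
    ∏ i, (a - lam i * (a * u)) = a ^ p * ∏ i, (1 - lam i * u) := by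
  have : ∀ i, a - lam i * (a * u) = a * (1 - lam i * u) := fun i => by ring
  simp only [this, Finset.prod_mul_distrib, Finset.prod_const, Finset.card_univ, Fintype.card_fin]

theorem MF_ne1 (x : MilnorFibre p q lam mu) (i : Fin p) : x.1 0 - lam i * x.1 1 ≠ 0 := by
  have : (∏ i, (x.1 0 - lam i * x.1 1)) ≠ 0 := left_ne_zero_of_mul_eq_one x.2
  exact Finset.prod_ne_zero_iff.1 this i (Finset.mem_univ _)

theorem MF_ne2 (x : MilnorFibre p q lam mu) (j : Fin q) : x.1 0 - mu j * x.1 2 ≠ 0 := by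
  have : (∏ i, (x.1 0 - mu i * x.1 2)) ≠ 0 := right_ne_zero_of_mul_eq_one x.2
  exact Finset.prod_ne_zero_iff.1 this j (Finset.mem_univ _)

theorem MF_cont (k : Fin 3) : Continuous (fun x : MilnorFibre p q lam mu => x.1 k) :=
  (continuous_apply k).comp continuous_subtype_val

/-- parametrisation of the part of the fibre with `x₀ ≠ 0` -/
noncomputable def ptF (lam : Fin p → ℂ) (mu : Fin q → ℂ) (hn : p + q ≠ 0) :
    C(Cov lam × Cov mu, MilnorFibre p q lam mu) :=
  ⟨fun x => ⟨![Complex.exp (-(x.1.1.1 + x.2.1.1) / (p + q : ℕ)),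
      Complex.exp (-(x.1.1.1 + x.2.1.1) / (p + q : ℕ)) * x.1.1.2,
      Complex.exp (-(x.1.1.1 + x.2.1.1) / (p + q : ℕ)) * x.2.1.2], by
      have hn' : ((p + q : ℕ) : ℂ) ≠ 0 := Nat.cast_ne_zero.2 hn
      have h1 : Complex.exp (-(x.1.1.1 + x.2.1.1) / (p + q : ℕ)) ^ (p + q) =
          Complex.exp (-(x.1.1.1 + x.2.1.1)) := by
        rw [← Complex.exp_nat_mul]; congr 1; field_simp
      simp only [Matrix.cons_val_zero, Matrix.cons_val_one, Matrix.cons_val]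
      rw [prod_scale, prod_scale, ← x.1.2, ← x.2.2]
      generalize Complex.exp (-(x.1.1.1 + x.2.1.1) / (p + q : ℕ)) = s at h1 ⊢
      calc s ^ p * Complex.exp x.1.1.1 * (s ^ q * Complex.exp x.2.1.1)
          = s ^ (p + q) * Complex.exp (x.1.1.1 + x.2.1.1) := by rw [pow_add, Complex.exp_add]; ring
        _ = 1 := by rw [h1, ← Complex.exp_add, neg_add_cancel, Complex.exp_zero]⟩, by
    refine Continuous.subtype_mk ?_ _
    refine continuous_pi fun k => ?_
    fin_cases k <;> simp <;> fun_prop⟩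

theorem ptF_shift (hn : p + q ≠ 0) (k : ℤ) (a : Cov lam) (b : Cov mu) :
    ptF lam mu hn (Cov.sh lam k a, b) = ptF lam mu hn (a, Cov.sh mu k b) := by
  apply Subtype.ext
  simp only [ptF, Cov.sh, ContinuousMap.coe_mk]
  have : a.1.1 + k * (2 * Real.pi * Complex.I) + b.1.1 = a.1.1 + (b.1.1 + k * (2 * Real.pi * Complex.I)) := by
    ring
  rw [this]

theorem ptF_period (hn : p + q ≠ 0) (a : Cov lam) (b : Cov mu) :
    ptF lam mu hn (Cov.sh lam (p + q : ℕ) a, b) = ptF lam mu hn (a, b) := by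
  apply Subtype.ext
  simp only [ptF, Cov.sh, ContinuousMap.coe_mk]
  have hn' : ((p + q : ℕ) : ℂ) ≠ 0 := Nat.cast_ne_zero.2 hn
  have : Complex.exp (-(a.1.1 + ((p + q : ℕ) : ℤ) * (2 * Real.pi * Complex.I) + b.1.1) / (p + q : ℕ)) =
      Complex.exp (-(a.1.1 + b.1.1) / (p + q : ℕ)) := by
    rw [Complex.exp_eq_exp_iff_exists_int]
    refine ⟨-1, ?_⟩
    field_simp
    push_cast
    ring
  rw [this]

theorem span_off (hlam : Function.Injective lam) (hmu : Function.Injective mu)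
    (hl : ∃ i, lam i ≠ 0) (hm : ∃ j, mu j ≠ 0)
    {φ : C(I, MilnorFibre p q lam mu) → ℂ} (hφ : IsCocycle φ) :
    ∃ (a : Fin p → ℂ) (b : Fin q → ℂ) (c : ℂ), ∀ γ : C(I, MilnorFibre p q lam mu), γ 0 = γ 1 →
      (∀ t, (γ t).1 0 ≠ 0) →
      φ γ = ∑ i, a i * wind (fun t => (γ t).1 0 - lam i * (γ t).1 1) +
        ∑ j, b j * wind (fun t => (γ t).1 0 - mu j * (γ t).1 2) + c * wind (fun t => (γ t).1 0) := by
  obtain ⟨i0, hi0⟩ := hl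
  obtain ⟨j0, hj0⟩ := hm
  have := Cov_pathConnected lam hlam i0 hi0
  have := Cov_pathConnected mu hmu j0 hj0
  have hn : p + q ≠ 0 := by have := i0.2; omega
  have hn' : ((p + q : ℕ) : ℂ) ≠ 0 := Nat.cast_ne_zero.2 hn
  obtain ⟨ψ, χ, hψ, hχ, H⟩ := product_decomp (Cov.isCyc lam) (Cov.isCyc mu) (ptF lam mu hn) (p + q) hn
    (ptF_shift hn) (ptF_period hn) hφ
  obtain ⟨a, ha⟩ := UU_span lam hlam hψ
  obtain ⟨b, hb⟩ := UU_span mu hmu hχ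
  refine ⟨a, b, - ∑ i, a i - ∑ j, b j, fun γ hγ h0 => ?_⟩
  have c0 : Continuous (fun t => (γ t).1 0) := (MF_cont 0).comp γ.continuous
  have c1 : Continuous (fun t => (γ t).1 1) := (MF_cont 1).comp γ.continuous
  have c2 : Continuous (fun t => (γ t).1 2) := (MF_cont 2).comp γ.continuous
  obtain ⟨S, hS, eS⟩ := exists_log_path (fun t => (γ t).1 0) c0 h0
  let u : I → ℂ := fun t => (γ t).1 1 / (γ t).1 0
  let v : I → ℂ := fun t => (γ t).1 2 / (γ t).1 0
  have hu : Continuous u := c1.div c0 h0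
  have hv : Continuous v := c2.div c0 h0
  have e1 : ∀ i t, (γ t).1 0 - lam i * (γ t).1 1 = (γ t).1 0 * (1 - lam i * u t) := by
    intro i t; have := h0 t; simp only [u]; field_simp
  have e2 : ∀ i t, (γ t).1 0 - mu i * (γ t).1 2 = (γ t).1 0 * (1 - mu i * v t) := by
    intro i t; have := h0 t; simp only [v]; field_simp
  have n1 : ∀ i t, 1 - lam i * u t ≠ 0 := fun i t h => MF_ne1 (γ t) i (by rw [e1, h, mul_zero])
  have n2 : ∀ i t, 1 - mu i * v t ≠ 0 := fun i t h => MF_ne2 (γ t) i (by rw [e2, h, mul_zero])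
  obtain ⟨L, hL, eL⟩ := exists_log_path (fun t => ∏ i, (1 - lam i * u t)) (by fun_prop)
    (fun t => Finset.prod_ne_zero_iff.2 fun i _ => n1 i t)
  let M : I → ℂ := fun t => -((p + q : ℕ) * S t) - L t
  have hM : Continuous M := by fun_prop
  have eM : ∀ t, Complex.exp (M t) = ∏ i, (1 - mu i * v t) := by
    intro t
    have h1 := (γ t).2
    simp only [e1, e2, Finset.prod_mul_distrib, Finset.prod_const, Finset.card_univ, Fintype.card_fin] at h1
    simp only [M]
    rw [Complex.exp_sub, Complex.exp_neg, Complex.exp_nat_mul, eS, eL]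
    have h2 := h0 t
    have h3 : ∏ i, (1 - lam i * u t) ≠ 0 := Finset.prod_ne_zero_iff.2 fun i _ => n1 i t
    rw [div_eq_iff h3]
    refine inv_eq_of_mul_eq_one_right ?_
    refine Eq.trans ?_ h1
    rw [pow_add]; ring
  let α : C(I, Cov lam) := ⟨fun t => ⟨(L t, u t), eL t⟩, by fun_prop⟩
  let β : C(I, Cov mu) := ⟨fun t => ⟨(M t, v t), eM t⟩, by fun_prop⟩
  have hpt : (ptF lam mu hn).comp (α.prodMk β) = γ := by
    ext t k
    have h1 : -(L t + M t) / (p + q : ℕ) = S t := by simp only [M]; field_simp; ring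
    have h2 := h0 t
    have h3 : Complex.exp (-(L t + M t) / (p + q : ℕ)) = (γ t).1 0 := by rw [h1, eS]
    change (![Complex.exp (-(L t + M t) / (p + q : ℕ)), Complex.exp (-(L t + M t) / (p + q : ℕ)) * u t,
      Complex.exp (-(L t + M t) / (p + q : ℕ)) * v t] : Fin 3 → ℂ) k = _
    rw [h3]
    fin_cases k <;> simp [u, v] <;> field_simp
  have u01 : u 0 = u 1 := by simp only [u, hγ]
  have v01 : v 0 = v 1 := by simp only [v, hγ]
  obtain ⟨a', ha'⟩ := Complex.exp_eq_exp_iff_exists_int.1 (show Complex.exp (L 1) = Complex.exp (L 0) by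
    rw [eL, eL, u01])
  obtain ⟨m', hm'⟩ := Complex.exp_eq_exp_iff_exists_int.1 (show Complex.exp (S 1) = Complex.exp (S 0) by
    rw [eS, eS, hγ])
  have key := H α β a' (-(p + q : ℕ) * m' - a') (by
      apply Subtype.ext; apply Prod.ext
      · exact ha'
      · exact u01.symm) (by
      apply Subtype.ext; apply Prod.ext
      · simp only [β, M, Cov.sh, ContinuousMap.coe_mk]
        rw [ha', hm']; push_cast; ring
      · exact v01.symm) ⟨-m', by push_cast; ring⟩
  rw [hpt] at key
  rw [key, ha _ (Subtype.ext u01), hb _ (Subtype.ext v01)]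
  have w1 : ∀ i, wind (fun t => (γ t).1 0 - lam i * (γ t).1 1) =
      wind (fun t => (γ t).1 0) + wind (fun t => 1 - lam i * u t) := by
    intro i
    rw [← wind_mul _ _ c0 (by fun_prop) h0 (n1 i)]
    simp only [e1]
  have w2 : ∀ i, wind (fun t => (γ t).1 0 - mu i * (γ t).1 2) =
      wind (fun t => (γ t).1 0) + wind (fun t => 1 - mu i * v t) := by
    intro i
    rw [← wind_mul _ _ c0 (by fun_prop) h0 (n2 i)]
    simp only [e2]
  simp only [w1, w2, mul_add, Finset.sum_add_distrib, ← Finset.sum_mul]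
  have f1 : ∀ i, (fun t => 1 - lam i * (((Cov.pr lam).comp α) t).1) = fun t => 1 - lam i * u t :=
    fun i => rfl
  have f2 : ∀ i, (fun t => 1 - mu i * (((Cov.pr mu).comp β) t).1) = fun t => 1 - mu i * v t :=
    fun i => rfl
  simp only [f1, f2]
  ring

end fibre

section local_structure

variable {p q : ℕ} {lam : Fin p → ℂ} {mu : Fin q → ℂ}

/-- radius of the disc in the `x₀` direction -/
noncomputable def rho (δ : ℝ) (x : Fin 3 → ℂ) : ℝ := δ * min ‖x 1‖ ‖x 2‖

/-- logarithm of the scaling factor -/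
noncomputable def GG (lam : Fin p → ℂ) (mu : Fin q → ℂ) (x : Fin 3 → ℂ) (w : ℂ) : ℂ :=
  (∑ i, Complex.log (1 - w / (lam i * x 1)) + ∑ j, Complex.log (1 - w / (mu j * x 2))) /
    (p + q : ℕ)

theorem exists_delta (hl : ∀ i, lam i ≠ 0) (hm : ∀ j, mu j ≠ 0) :
    ∃ δ : ℝ, 0 < δ ∧ (∀ i, δ ≤ ‖lam i‖) ∧ ∀ j, δ ≤ ‖mu j‖ := by
  have key : ∀ (r : ℕ) (g : Fin r → ℂ), (∀ i, g i ≠ 0) → ∃ δ : ℝ, 0 < δ ∧ ∀ i, δ ≤ ‖g i‖ := by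
    intro r g hg
    rcases isEmpty_or_nonempty (Fin r) with h | h
    · exact ⟨1, one_pos, fun i => (h.false i).elim⟩
    · obtain ⟨i, hi⟩ := Finite.exists_min (fun i => ‖g i‖)
      exact ⟨‖g i‖, norm_pos_iff.2 (hg i), hi⟩
  obtain ⟨d, d0, hd⟩ := key p lam hl
  obtain ⟨e, e0, he⟩ := key q mu hm
  exact ⟨min d e, lt_min d0 e0, fun i => (min_le_left _ _).trans (hd i),
    fun j => (min_le_right _ _).trans (he j)⟩

theorem rho_ne {δ : ℝ} (hδ : 0 < δ) {x : Fin 3 → ℂ} {w : ℂ} (hw : ‖w‖ < rho δ x) :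
    x 1 ≠ 0 ∧ x 2 ≠ 0 := by
  have h1 : 0 < rho δ x := (norm_nonneg w).trans_lt hw
  have h2 : 0 < min ‖x 1‖ ‖x 2‖ := pos_of_mul_pos_right h1 hδ.le
  rw [lt_min_iff] at h2
  exact ⟨norm_pos_iff.1 h2.1, norm_pos_iff.1 h2.2⟩

theorem rho_slit {δ : ℝ} (hδ : 0 < δ) {x : Fin 3 → ℂ} {w c : ℂ} (hw : ‖w‖ < rho δ x)
    (hc : δ ≤ ‖c‖) (k : Fin 3) (hk : k = 1 ∨ k = 2) : 1 - w / (c * x k) ∈ Complex.slitPlane := by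
  have h1 := rho_ne hδ hw
  have hk0 : 0 < ‖x k‖ := by rcases hk with rfl | rfl <;> [exact norm_pos_iff.2 h1.1; exact norm_pos_iff.2 h1.2]
  have hm : min ‖x 1‖ ‖x 2‖ ≤ ‖x k‖ := by
    rcases hk with rfl | rfl <;> [exact min_le_left _ _; exact min_le_right _ _]
  rw [sub_eq_add_neg]
  apply Complex.mem_slitPlane_of_norm_lt_one
  rw [norm_neg, norm_div, norm_mul, div_lt_one (mul_pos (hδ.trans_le hc) hk0)]
  exact hw.trans_le (mul_le_mul hc hm (by positivity) (by positivity))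

theorem GG_cont {Z : Type} [TopologicalSpace Z] {δ : ℝ} (hδ : 0 < δ) (hl : ∀ i, δ ≤ ‖lam i‖)
    (hm : ∀ j, δ ≤ ‖mu j‖) (x : Z → Fin 3 → ℂ) (w : Z → ℂ) (hx : Continuous x) (hw : Continuous w)
    (h : ∀ z, ‖w z‖ < rho δ (x z)) : Continuous (fun z => GG lam mu (x z) (w z)) := by
  have h1 : Continuous (fun z => x z 1) := by fun_prop
  have h2 : Continuous (fun z => x z 2) := by fun_prop
  have l0 : ∀ i, lam i ≠ 0 := fun i => norm_pos_iff.1 (hδ.trans_le (hl i))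
  have m0 : ∀ i, mu i ≠ 0 := fun i => norm_pos_iff.1 (hδ.trans_le (hm i))
  unfold GG
  refine Continuous.div_const (Continuous.add ?_ ?_) _
  · refine continuous_finsetSum _ fun i _ => Continuous.clog ?_ fun z => rho_slit hδ (h z) (hl i) 1 (Or.inl rfl)
    exact continuous_const.sub (hw.div (by fun_prop) fun z => mul_ne_zero (l0 i) (rho_ne hδ (h z)).1)
  · refine continuous_finsetSum _ fun i _ => Continuous.clog ?_ fun z => rho_slit hδ (h z) (hm i) 2 (Or.inr rfl)
    exact continuous_const.sub (hw.div (by fun_prop) fun z => mul_ne_zero (m0 i) (rho_ne hδ (h z)).2)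

theorem GG_exp {δ : ℝ} (hδ : 0 < δ) (hl : ∀ i, δ ≤ ‖lam i‖) (hn : p + q ≠ 0)
    (hm : ∀ j, δ ≤ ‖mu j‖) (x : Fin 3 → ℂ) (w : ℂ) (h : ‖w‖ < rho δ x) :
    Complex.exp (GG lam mu x w) ^ (p + q) * ((∏ i, (-(lam i * x 1))) * ∏ j, (-(mu j * x 2))) =
      (∏ i, (w - lam i * x 1)) * ∏ j, (w - mu j * x 2) := by
  have hn' : ((p + q : ℕ) : ℂ) ≠ 0 := Nat.cast_ne_zero.2 hn
  have l0 : ∀ i, lam i ≠ 0 := fun i => norm_pos_iff.1 (hδ.trans_le (hl i))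
  have m0 : ∀ i, mu i ≠ 0 := fun i => norm_pos_iff.1 (hδ.trans_le (hm i))
  have hx := rho_ne hδ h
  rw [← Complex.exp_nat_mul]
  unfold GG
  rw [mul_div_cancel₀ _ hn', Complex.exp_add, Complex.exp_sum, Complex.exp_sum]
  have e1 : ∀ i, Complex.exp (Complex.log (1 - w / (lam i * x 1))) * (-(lam i * x 1)) = w - lam i * x 1 := by
    intro i
    rw [Complex.exp_log (Complex.slitPlane_ne_zero (rho_slit hδ h (hl i) 1 (Or.inl rfl)))]
    have := l0 i; have := hx.1
    field_simp; ring
  have e2 : ∀ i, Complex.exp (Complex.log (1 - w / (mu i * x 2))) * (-(mu i * x 2)) = w - mu i * x 2 := by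
    intro i
    rw [Complex.exp_log (Complex.slitPlane_ne_zero (rho_slit hδ h (hm i) 2 (Or.inr rfl)))]
    have := m0 i; have := hx.2
    field_simp; ring
  rw [mul_mul_mul_comm, ← Finset.prod_mul_distrib, ← Finset.prod_mul_distrib]
  simp only [e1, e2]

/-- domain of the local disc parametrisation -/
abbrev DD (lam : Fin p → ℂ) (mu : Fin q → ℂ) (δ : ℝ) : Type :=
  {z : MilnorFibre p q lam mu × ℂ // ‖z.1.1 0‖ < rho δ z.1.1 ∧ ‖z.2‖ < rho δ z.1.1}

theorem exists_K {δ : ℝ} (hδ : 0 < δ) (hl : ∀ i, δ ≤ ‖lam i‖) (hm : ∀ j, δ ≤ ‖mu j‖) (hn : p + q ≠ 0) :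
    ∃ K : C(DD lam mu δ, MilnorFibre p q lam mu),
      (∀ z, (K z).1 0 = Complex.exp (GG lam mu z.1.1.1 (z.1.1.1 0) - GG lam mu z.1.1.1 z.1.2) * z.1.2) ∧
      ∀ z, z.1.2 = z.1.1.1 0 → K z = z.1.1 := by
  have ck : ∀ k, Continuous (fun z : DD lam mu δ => z.1.1.1 k) :=
    fun k => (MF_cont k).comp (continuous_fst.comp continuous_subtype_val)
  let E : DD lam mu δ → ℂ := fun z =>
    Complex.exp (GG lam mu z.1.1.1 (z.1.1.1 0) - GG lam mu z.1.1.1 z.1.2)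
  have hE : Continuous E := by
    have c0 : Continuous (fun z : DD lam mu δ => z.1.1.1) := by fun_prop
    have c1 := GG_cont hδ hl hm (fun z : DD lam mu δ => z.1.1.1) (fun z => z.1.1.1 0) c0
      (ck 0) (fun z => z.2.1)
    have c2 := GG_cont hδ hl hm (fun z : DD lam mu δ => z.1.1.1) (fun z => z.1.2) c0
      (by fun_prop) (fun z => z.2.2)
    exact Complex.continuous_exp.comp (c1.sub c2)
  have scale : ∀ {r : ℕ} (g : Fin r → ℂ) (a b c : ℂ), ∏ i, (a * b - g i * (a * c)) =
      a ^ r * ∏ i, (b - g i * c) := by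
    intro r g a b c
    have : ∀ i, a * b - g i * (a * c) = a * (b - g i * c) := fun i => by ring
    simp only [this, Finset.prod_mul_distrib, Finset.prod_const, Finset.card_univ, Fintype.card_fin]
  refine ⟨⟨fun z => ⟨![E z * z.1.2, E z * z.1.1.1 1, E z * z.1.1.1 2], ?_⟩, ?_⟩, ?_, ?_⟩
  · simp only [Matrix.cons_val_zero, Matrix.cons_val_one, Matrix.cons_val]
    rw [scale, scale]
    have h1 := GG_exp hδ hl hn hm z.1.1.1 z.1.2 z.2.2
    have h2 := GG_exp hδ hl hn hm z.1.1.1 (z.1.1.1 0) z.2.1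
    have h3 := z.1.1.2
    rw [mul_mul_mul_comm, ← h1, ← pow_add]
    simp only [E]
    rw [← mul_assoc, ← mul_pow, ← Complex.exp_add, sub_add_cancel, h2]
    exact h3
  · refine Continuous.subtype_mk ?_ _
    refine continuous_pi fun k => ?_
    fin_cases k
    · exact hE.mul (continuous_snd.comp continuous_subtype_val)
    · exact hE.mul (ck 1)
    · exact hE.mul (ck 2)
  · intro z; rfl
  · intro z hz
    apply Subtype.ext
    have : E z = 1 := by simp only [E, hz, sub_self, Complex.exp_zero]
    simp only [ContinuousMap.coe_mk, this, hz]
    ext k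
    fin_cases k <;> simp

end local_structure

section disc

theorem disc_comb {r : ℝ} {a b : ℂ} (ha : ‖a‖ < r) (hb : ‖b‖ < r) (t : I) :
    ‖(1 - ((t : ℝ) : ℂ)) * a + ((t : ℝ) : ℂ) * b‖ < r := by
  have h := convex_ball (0 : ℂ) r (mem_ball_zero_iff.2 ha) (mem_ball_zero_iff.2 hb)
    (sub_nonneg.2 t.2.2) t.2.1 (by ring)
  rw [mem_ball_zero_iff] at h
  simpa using h

theorem disc_exp {r : ℝ} {a b : ℂ} (ha : ‖a‖ < r) (hb : ‖b‖ < r) (a0 : a ≠ 0) (b0 : b ≠ 0) (t : I) :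
    ‖Complex.exp ((1 - ((t : ℝ) : ℂ)) * Complex.log a + ((t : ℝ) : ℂ) * Complex.log b)‖ < r := by
  have hr : 0 < r := (norm_nonneg a).trans_lt ha
  have e : ((1 - ((t : ℝ) : ℂ)) * Complex.log a + ((t : ℝ) : ℂ) * Complex.log b).re =
      (1 - (t : ℝ)) * Real.log ‖a‖ + t * Real.log ‖b‖ := by
    simp [Complex.log_re]
  rw [Complex.norm_exp, e, ← Real.lt_log_iff_exp_lt hr]
  have h1 := Real.log_lt_log (norm_pos_iff.2 a0) ha
  have h2 := Real.log_lt_log (norm_pos_iff.2 b0) hb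
  have h := convex_Iio (Real.log r) h1 h2 (sub_nonneg.2 t.2.2) t.2.1 (by ring)
  simpa using h

variable {X : Type} [TopologicalSpace X]

/-- if a cocycle vanishes on loops avoiding a divisor with disc neighbourhood, it vanishes on
all loops -/
theorem extend_over (x0 : X → ℂ) (hx0 : Continuous x0) (r : X → ℝ) (hr : Continuous r)
    (hN : ∀ x, x0 x = 0 → 0 < r x)
    (K : C({z : X × ℂ // ‖x0 z.1‖ < r z.1 ∧ ‖z.2‖ < r z.1}, X))
    (hK0 : ∀ z, z.1.2 ≠ 0 → x0 (K z) ≠ 0) (hK1 : ∀ z, z.1.2 = x0 z.1.1 → K z = z.1.1)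
    {ψ : C(I, X) → ℂ} (hψ : IsCocycle ψ)
    (hv : ∀ γ : C(I, X), (∀ t, x0 (γ t) ≠ 0) → γ 0 = γ 1 → ψ γ = 0)
    (γ : C(I, X)) (hγ : γ 0 = γ 1) : ψ γ = 0 := by
  classical
  obtain ⟨f, hf⟩ := hψ.exists_primitive_on {x | x0 x ≠ 0} hv
  have hrp : ∀ {x}, ‖x0 x‖ < r x → 0 < r x := fun h => (norm_nonneg _).trans_lt h
  have hh : ∀ {x}, ‖x0 x‖ < r x → ‖((r x / 2 : ℝ) : ℂ)‖ < r x := by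
    intro x h
    have := hrp h
    rw [Complex.norm_real, Real.norm_of_nonneg (by positivity)]
    linarith
  have hh0 : ∀ {x}, ‖x0 x‖ < r x → ((r x / 2 : ℝ) : ℂ) ≠ 0 := by
    intro x h
    have := hrp h
    exact Complex.ofReal_ne_zero.2 (by positivity)
  -- the radial path
  let P : ∀ x, ‖x0 x‖ < r x → C(I, X) := fun x h =>
    ⟨fun t => K ⟨(x, (1 - ((t : ℝ) : ℂ)) * ((r x / 2 : ℝ) : ℂ) + ((t : ℝ) : ℂ) * x0 x),
      h, disc_comb (hh h) h t⟩, by fun_prop⟩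
  let g : X → ℂ := fun x => if h : ‖x0 x‖ < r x then
    f (K ⟨(x, ((r x / 2 : ℝ) : ℂ)), h, hh h⟩) + ψ (P x h) else 0
  have hg : ∀ x (h : ‖x0 x‖ < r x), g x = f (K ⟨(x, ((r x / 2 : ℝ) : ℂ)), h, hh h⟩) + ψ (P x h) :=
    fun x h => dif_pos h
  have hfg : ∀ x, ‖x0 x‖ < r x → x0 x ≠ 0 → g x = f x := by
    intro x h hx
    rw [hg x h]
    let P' : C(I, X) := ⟨fun t => K ⟨(x, Complex.exp ((1 - ((t : ℝ) : ℂ)) *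
      Complex.log ((r x / 2 : ℝ) : ℂ) + ((t : ℝ) : ℂ) * Complex.log (x0 x))),
      h, disc_exp (hh h) h (hh0 h) hx t⟩, by fun_prop⟩
    have e1 := hf P' (fun t => hK0 _ (Complex.exp_ne_zero _))
    have s0 : P' 0 = K ⟨(x, ((r x / 2 : ℝ) : ℂ)), h, hh h⟩ := by
      have := Complex.exp_log (hh0 h)
      simp only [P', ContinuousMap.coe_mk]
      congr 3
      simp [-Complex.ofReal_div, this]
    have s1 : P' 1 = x := by
      simp only [P', ContinuousMap.coe_mk]
      refine hK1 _ ?_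
      simp [Complex.exp_log hx]
    have e2 := hψ.sq (fun z : I × I => K ⟨(x, (1 - ((z.2 : ℝ) : ℂ)) * ((1 - ((z.1 : ℝ) : ℂ)) * ((r x / 2 : ℝ) : ℂ) + ((z.1 : ℝ) : ℂ) * x0 x) +
      ((z.2 : ℝ) : ℂ) * Complex.exp ((1 - ((z.1 : ℝ) : ℂ)) *
      Complex.log ((r x / 2 : ℝ) : ℂ) + ((z.1 : ℝ) : ℂ) * Complex.log (x0 x))),
        h, disc_comb (disc_comb (hh h) h z.1) (disc_exp (hh h) h (hh0 h) hx z.1) z.2⟩) (by fun_prop)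
      (P x h) (ContinuousMap.const I x) (ContinuousMap.const I (P' 0)) P'
      (fun t => by simp [P]) (fun t => by
        symm
        refine (hK1 _ ?_)
        simp [Complex.exp_log hx]
        ring) (fun t => by
        rw [s0, ContinuousMap.const_apply]
        have := Complex.exp_log (hh0 h)
        congr 3
        simp only [Set.Icc.coe_zero, Complex.ofReal_zero, sub_zero, one_mul, zero_mul, add_zero, this]
        ring) (fun t => by simp [P'])
    rw [hψ.const, hψ.const] at e2
    rw [s0, s1] at e1
    linear_combination e2 + e1
  have main := hψ.glue (fun b : Bool => if b then {x | x0 x ≠ 0} else {x | ‖x0 x‖ < r x})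
    (by
      intro b
      cases b
      · simpa using isOpen_lt (by fun_prop) hr
      · simpa using isOpen_ne_fun hx0 continuous_const)
    (by
      intro x
      by_cases h : x0 x = 0
      · exact ⟨false, by simpa [h] using hN x h⟩
      · exact ⟨true, by simpa using h⟩)
    (fun x => if x0 x = 0 then g x else f x) (by
      intro b γ hb
      cases b
      · have hb' : ∀ t, ‖x0 (γ t)‖ < r (γ t) := by simpa using hb
        have hg' : ∀ t, (if x0 (γ t) = 0 then g (γ t) else f (γ t)) = g (γ t) := by
          intro t
          split_ifs with h
          · rfl
          · exact (hfg _ (hb' t) h).symm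
        simp only [hg']
        let B : C(I, X) := ⟨fun t => K ⟨(γ t, ((r (γ t) / 2 : ℝ) : ℂ)), hb' t, hh (hb' t)⟩, by fun_prop⟩
        have e1 := hf B (fun t => hK0 _ (hh0 (hb' t)))
        have e2 := hψ.sq (fun z : I × I => K ⟨(γ z.1, (1 - ((z.2 : ℝ) : ℂ)) * ((r (γ z.1) / 2 : ℝ) : ℂ) +
          ((z.2 : ℝ) : ℂ) * x0 (γ z.1)), hb' z.1, disc_comb (hh (hb' z.1)) (hb' z.1) z.2⟩) (by fun_prop)
          B (P _ (hb' 1)) (P _ (hb' 0)) γ (fun t => by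
            change K _ = K _
            congr 3
            simp) (fun t => rfl) (fun t => rfl)
          (fun t => by
            symm
            refine hK1 _ ?_
            simp)
        rw [hg _ (hb' 0), hg _ (hb' 1)]
        have b1 : B 1 = K ⟨(γ 1, ((r (γ 1) / 2 : ℝ) : ℂ)), hb' 1, hh (hb' 1)⟩ := rfl
        have b0 : B 0 = K ⟨(γ 0, ((r (γ 0) / 2 : ℝ) : ℂ)), hb' 0, hh (hb' 0)⟩ := rfl
        rw [b0, b1] at e1
        linear_combination e1 - e2
      · have hb' : ∀ t, x0 (γ t) ≠ 0 := by simpa using hb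
        simp only [hb', if_false]
        exact hf γ hb') γ
  rw [main, hγ, sub_self]

end disc

section span_all

variable {p q : ℕ} {lam : Fin p → ℂ} {mu : Fin q → ℂ}

theorem exists_zero_point (hl : ∀ i, lam i ≠ 0) (hm : ∀ j, mu j ≠ 0) (hn : p + q ≠ 0) :
    ∃ x : MilnorFibre p q lam mu, x.1 0 = 0 ∧ x.1 1 ≠ 0 ∧ x.1 2 ≠ 0 := by
  have hn' : ((p + q : ℕ) : ℂ) ≠ 0 := Nat.cast_ne_zero.2 hn
  let C : ℂ := (∏ i, -lam i) * ∏ j, -mu j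
  have hC : C ≠ 0 := mul_ne_zero (Finset.prod_ne_zero_iff.2 fun i _ => neg_ne_zero.2 (hl i))
    (Finset.prod_ne_zero_iff.2 fun i _ => neg_ne_zero.2 (hm i))
  let α : ℂ := Complex.exp (-Complex.log C / (p + q : ℕ))
  have hα : α ^ (p + q) * C = 1 := by
    simp only [α]
    rw [← Complex.exp_nat_mul, mul_div_cancel₀ _ hn', Complex.exp_neg, Complex.exp_log hC,
      inv_mul_cancel₀ hC]
  refine ⟨⟨![0, α, α], ?_⟩, rfl, Complex.exp_ne_zero _, Complex.exp_ne_zero _⟩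
  simp only [Matrix.cons_val_zero, Matrix.cons_val_one, Matrix.cons_val]
  have : ∀ {r : ℕ} (g : Fin r → ℂ), ∏ i, (0 - g i * α) = α ^ r * ∏ i, -g i := by
    intro r g
    have : ∀ i, 0 - g i * α = α * -g i := fun i => by ring
    simp only [this, Finset.prod_mul_distrib, Finset.prod_const, Finset.card_univ, Fintype.card_fin]
  rw [this, this, ← hα, pow_add]
  simp only [C]
  ring

/-- a cocycle proportional to the winding of `x₀` off `x₀ = 0` has coefficient zero -/
theorem coeff_zero (hl : ∀ i, lam i ≠ 0) (hm : ∀ j, mu j ≠ 0) (hn : p + q ≠ 0)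
    {ψ : C(I, MilnorFibre p q lam mu) → ℂ} (hψ : IsCocycle ψ) (c : ℂ)
    (h : ∀ γ : C(I, MilnorFibre p q lam mu), γ 0 = γ 1 → (∀ t, (γ t).1 0 ≠ 0) →
      ψ γ = c * wind (fun t => (γ t).1 0)) : c = 0 := by
  obtain ⟨δ, hδ, dl, dm⟩ := exists_delta hl hm
  obtain ⟨K, hK, -⟩ := exists_K hδ dl dm hn
  obtain ⟨x, x0, x1, x2⟩ := exists_zero_point hl hm hn
  have hr : 0 < rho δ x.1 := mul_pos hδ (lt_min (norm_pos_iff.2 x1) (norm_pos_iff.2 x2))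
  set r : ℝ := rho δ x.1 with hrdef
  have hr2 : ((r / 2 : ℝ) : ℂ) ≠ 0 := Complex.ofReal_ne_zero.2 (by positivity)
  let w : I → ℂ := fun t => ((r / 2 : ℝ) : ℂ) * Complex.exp (2 * Real.pi * Complex.I * ((t : ℝ) : ℂ))
  have hwc : Continuous w := by fun_prop
  have hw : ∀ t, ‖w t‖ < r := by
    intro t
    have : (2 * Real.pi * Complex.I * ((t : ℝ) : ℂ)) = ((2 * Real.pi * t : ℝ) : ℂ) * Complex.I := by
      push_cast; ring
    simp only [w]
    rw [norm_mul, this, Complex.norm_exp_ofReal_mul_I, Complex.norm_real,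
      Real.norm_of_nonneg (by positivity)]
    linarith
  have hw01 : w 0 = w 1 := by simp [w, Complex.exp_two_pi_mul_I]
  have hw' : ∀ (t s : I), ‖(1 - ((s : ℝ) : ℂ)) * w t + ((s : ℝ) : ℂ) * 0‖ < r := fun t s =>
    disc_comb (hw t) (by simpa using hr) s
  have hx : ‖x.1 0‖ < rho δ x.1 := by rw [x0, norm_zero]; exact hr
  let s : I × I → MilnorFibre p q lam mu := fun z =>
    K ⟨(x, (1 - ((z.2 : ℝ) : ℂ)) * w z.1 + ((z.2 : ℝ) : ℂ) * 0), hx, hw' z.1 z.2⟩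
  have hs : Continuous s := by fun_prop
  let b : C(I, MilnorFibre p q lam mu) := ⟨fun t => K ⟨(x, w t), hx, hw t⟩, by fun_prop⟩
  let u : C(I, MilnorFibre p q lam mu) := ⟨fun t => s (t, 1), by fun_prop⟩
  have e1 : ψ b = ψ u := hψ.loop_homotopy s hs (fun t => by simp only [s, hw01]) b u
    (fun t => by
      change K _ = K _
      congr 3
      simp) (fun t => rfl)
  have e2 : ψ u = 0 := hψ.const' u (K ⟨(x, 0), hx, by simpa using hr⟩) (fun t => by
      change K _ = K _
      congr 3
      simp)
  have hGc := GG_cont hδ dl dm (fun _ : I => x.1) w continuous_const hwc hw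
  have e3 : wind (fun t => (b t).1 0) = 2 * Real.pi * Complex.I := by
    rw [wind_eq _ (fun t => GG lam mu x.1 (x.1 0) - GG lam mu x.1 (w t) +
      Complex.log ((r / 2 : ℝ) : ℂ) + 2 * Real.pi * Complex.I * ((t : ℝ) : ℂ)) (by fun_prop)]
    · rw [hw01]; simp
    · intro t
      have := hK ⟨(x, w t), hx, hw t⟩
      simp only [b, ContinuousMap.coe_mk]
      rw [this, add_assoc, Complex.exp_add _ (_ + _), Complex.exp_add (Complex.log _), Complex.exp_log hr2]
  have e4 := h b (by
    change K _ = K _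
    congr 3) (fun t => by
    have := hK ⟨(x, w t), hx, hw t⟩
    simp only [b, ContinuousMap.coe_mk]
    rw [this]
    exact mul_ne_zero (Complex.exp_ne_zero _) (mul_ne_zero hr2 (Complex.exp_ne_zero _)))
  rw [e1, e2, e3] at e4
  exact (mul_eq_zero.1 e4.symm).resolve_right Complex.two_pi_I_ne_zero

theorem span_all (hlam : Function.Injective lam) (hmu : Function.Injective mu)
    (hl : ∃ i, lam i ≠ 0) (hm : ∃ j, mu j ≠ 0)
    {φ : C(I, MilnorFibre p q lam mu) → ℂ} (hφ : IsCocycle φ) :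
    ∃ (a : Fin p → ℂ) (b : Fin q → ℂ), ∀ γ : C(I, MilnorFibre p q lam mu), γ 0 = γ 1 →
      φ γ = ∑ i, a i * wind (fun t => (γ t).1 0 - lam i * (γ t).1 1) +
        ∑ j, b j * wind (fun t => (γ t).1 0 - mu j * (γ t).1 2) := by
  classical
  obtain ⟨a, b, c, H⟩ := span_off hlam hmu hl hm hφ
  by_cases hl0 : ∃ i, lam i = 0
  · obtain ⟨i, hi⟩ := hl0
    refine ⟨fun k => a k + if k = i then c else 0, b, fun γ hγ => ?_⟩
    rw [H γ hγ (fun t => by simpa [hi] using MF_ne1 (γ t) i)]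
    simp only [add_mul, Finset.sum_add_distrib, ite_mul, zero_mul, Finset.sum_ite_eq',
      Finset.mem_univ, if_true, hi, sub_zero]
    ring
  by_cases hm0 : ∃ i, mu i = 0
  · obtain ⟨i, hi⟩ := hm0
    refine ⟨a, fun k => b k + if k = i then c else 0, fun γ hγ => ?_⟩
    rw [H γ hγ (fun t => by simpa [hi] using MF_ne2 (γ t) i)]
    simp only [add_mul, Finset.sum_add_distrib, ite_mul, zero_mul, Finset.sum_ite_eq',
      Finset.mem_univ, if_true, hi, sub_zero]
    ring
  push Not at hl0 hm0
  have hn : p + q ≠ 0 := by obtain ⟨i, -⟩ := hl; have := i.2; omega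
  refine ⟨a, b, ?_⟩
  have h1 : IsCocycle (fun γ : C(I, MilnorFibre p q lam mu) =>
      ∑ i, a i * wind (fun t => (γ t).1 0 - lam i * (γ t).1 1)) :=
    IsCocycle.sum _ fun i _ => (wind_cocycle (fun x : MilnorFibre p q lam mu => x.1 0 - lam i * x.1 1)
      ((MF_cont 0).sub (continuous_const.mul (MF_cont 1))) (fun x => MF_ne1 x i)).smul (a i)
  have h2 : IsCocycle (fun γ : C(I, MilnorFibre p q lam mu) =>
      ∑ i, b i * wind (fun t => (γ t).1 0 - mu i * (γ t).1 2)) :=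
    IsCocycle.sum _ fun i _ => (wind_cocycle (fun x : MilnorFibre p q lam mu => x.1 0 - mu i * x.1 2)
      ((MF_cont 0).sub (continuous_const.mul (MF_cont 2))) (fun x => MF_ne2 x i)).smul (b i)
  have hψ := hφ.sub (h1.add h2)
  have hc : c = 0 := coeff_zero hl0 hm0 hn hψ c (fun γ hγ h0 => by
    rw [H γ hγ h0]; ring)
  obtain ⟨δ, hδ, dl, dm⟩ := exists_delta hl0 hm0
  obtain ⟨K, hK, hK'⟩ := exists_K hδ dl dm hn
  intro γ hγ
  have := extend_over (fun x : MilnorFibre p q lam mu => x.1 0) (MF_cont 0) (fun x => rho δ x.1)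
    (continuous_const.mul ((MF_cont 1).norm.min (MF_cont 2).norm)) (fun x hx => by
      obtain ⟨i, -⟩ := hl
      obtain ⟨j, -⟩ := hm
      have h1 := MF_ne1 x i
      have h2 := MF_ne2 x j
      rw [hx, zero_sub, neg_ne_zero] at h1 h2
      exact mul_pos hδ (lt_min (norm_pos_iff.2 (right_ne_zero_of_mul h1))
        (norm_pos_iff.2 (right_ne_zero_of_mul h2)))) K (fun z hz => by
      simp only [hK z]
      exact mul_ne_zero (Complex.exp_ne_zero _) hz) hK' hψ (fun γ h0 hγ => by
        rw [H γ hγ h0, hc]; ring) γ hγ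
  linear_combination this

end span_all

section relations

variable {p q : ℕ} {lam : Fin p → ℂ} {mu : Fin q → ℂ}

theorem exists_loop (hlam : Function.Injective lam) (hmu : Function.Injective mu)
    (hm : ∃ j, mu j ≠ 0) (i : Fin p) (hi : lam i ≠ 0) :
    ∃ γ : C(I, MilnorFibre p q lam mu), γ 0 = γ 1 ∧
      (∀ k, wind (fun t => (γ t).1 0 - lam k * (γ t).1 1) =
        ((if k = i then (p + q : ℕ) else 0) - 1) * (2 * Real.pi * Complex.I)) ∧
      ∀ j, wind (fun t => (γ t).1 0 - mu j * (γ t).1 2) = -(2 * Real.pi * Complex.I) := by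
  obtain ⟨j0, hj0⟩ := hm
  have hb := Cov_pathConnected mu hmu j0 hj0
  obtain ⟨b⟩ := hb.nonempty
  have hn : p + q ≠ 0 := by have := i.2; omega
  have hn' : ((p + q : ℕ) : ℂ) ≠ 0 := Nat.cast_ne_zero.2 hn
  obtain ⟨u, L, hu, hL, eL, pu, pL⟩ := exists_circle lam hlam i hi
  let N : ℝ := (p + q : ℕ)
  let a : C(I, Cov lam) := ⟨fun t => ⟨(∑ k, L k (N * t), u (N * t)), by
    simp only [Complex.exp_sum, eL]⟩, by fun_prop⟩
  have a1 : a 1 = Cov.sh lam (p + q : ℕ) (a 0) := by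
    apply Subtype.ext
    apply Prod.ext
    · simp only [a, Cov.sh, ContinuousMap.coe_mk, Set.Icc.coe_one, Set.Icc.coe_zero, mul_one, mul_zero, N, pL,
        Finset.sum_add_distrib, Finset.sum_ite_eq', Finset.mem_univ, if_true]
      push_cast; ring
    · simp only [a, Cov.sh, ContinuousMap.coe_mk, Set.Icc.coe_one, Set.Icc.coe_zero, mul_one, mul_zero, N, pu]
  have a1' : (a 1).1.1 - (a 0).1.1 = (p + q : ℕ) * (2 * Real.pi * Complex.I) := by
    rw [a1]; simp only [Cov.sh, ContinuousMap.coe_mk]; push_cast; ring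
  let γ : C(I, MilnorFibre p q lam mu) := ⟨fun t => ptF lam mu hn (a t, b), by fun_prop⟩
  have hc : Continuous (fun t => (a t).1.1) := by fun_prop
  have c0 : ∀ t, (γ t).1 0 = Complex.exp (-((a t).1.1 + b.1.1) / (p + q : ℕ)) := fun t => rfl
  have c1 : ∀ t, (γ t).1 1 = Complex.exp (-((a t).1.1 + b.1.1) / (p + q : ℕ)) * u (N * t) := fun t => rfl
  have c2 : ∀ t, (γ t).1 2 = Complex.exp (-((a t).1.1 + b.1.1) / (p + q : ℕ)) * b.1.2 := fun t => rfl
  refine ⟨γ, ?_, fun k => ?_, fun j => ?_⟩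
  · change ptF lam mu hn (a 0, b) = ptF lam mu hn (a 1, b)
    rw [a1, ptF_period]
  · rw [wind_eq _ (fun t => -((a t).1.1 + b.1.1) / (p + q : ℕ) + L k (N * t)) (by fun_prop)]
    · have e := pL k (p + q)
      simp only [Set.Icc.coe_one, Set.Icc.coe_zero, mul_one, mul_zero, N]
      rw [e]
      have : (a 1).1.1 = (a 0).1.1 + (p + q : ℕ) * (2 * Real.pi * Complex.I) := by
        linear_combination a1'
      rw [this]
      split_ifs <;> field_simp <;> push_cast <;> ring
    · intro t
      rw [Complex.exp_add, eL, c0, c1]; ring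
  · have hb0 : 1 - mu j * b.1.2 ≠ 0 := by
      have h := b.2
      have : ∏ i, (1 - mu i * b.1.2) ≠ 0 := by rw [← h]; exact Complex.exp_ne_zero _
      exact Finset.prod_ne_zero_iff.1 this j (Finset.mem_univ _)
    rw [wind_eq _ (fun t => -((a t).1.1 + b.1.1) / (p + q : ℕ) + Complex.log (1 - mu j * b.1.2)) (by fun_prop)]
    · have : (a 1).1.1 = (a 0).1.1 + (p + q : ℕ) * (2 * Real.pi * Complex.I) := by
        linear_combination a1'
      rw [this]
      field_simp; ring
    · intro t
      rw [Complex.exp_add, Complex.exp_log hb0, c0, c2]; ring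

theorem exists_loop2 (hlam : Function.Injective lam) (hmu : Function.Injective mu)
    (hl : ∃ j, lam j ≠ 0) (i : Fin q) (hi : mu i ≠ 0) :
    ∃ γ : C(I, MilnorFibre p q lam mu), γ 0 = γ 1 ∧
      (∀ j, wind (fun t => (γ t).1 0 - lam j * (γ t).1 1) = -(2 * Real.pi * Complex.I)) ∧
      ∀ k, wind (fun t => (γ t).1 0 - mu k * (γ t).1 2) =
        ((if k = i then (p + q : ℕ) else 0) - 1) * (2 * Real.pi * Complex.I) := by
  obtain ⟨γ, h0, h1, h2⟩ := exists_loop hmu hlam hl i hi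
  let g : C(MilnorFibre q p mu lam, MilnorFibre p q lam mu) :=
    ⟨fun x => ⟨![x.1 0, x.1 2, x.1 1], by
      have := x.2
      rw [mul_comm] at this
      simpa using this⟩, by
      refine Continuous.subtype_mk (continuous_pi fun k => ?_) _
      fin_cases k
      · exact MF_cont 0
      · exact MF_cont 2
      · exact MF_cont 1⟩
  refine ⟨g.comp γ, by simp [h0], fun j => h2 j, fun k => ?_⟩
  rw [add_comm p q]
  exact h1 k

theorem sum_wind (γ : C(I, MilnorFibre p q lam mu)) :
    ∑ i, wind (fun t => (γ t).1 0 - lam i * (γ t).1 1) +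
        ∑ j, wind (fun t => (γ t).1 0 - mu j * (γ t).1 2) = 0 := by
  have c : ∀ k, Continuous (fun t => (γ t).1 k) := fun k => (MF_cont k).comp γ.continuous
  have c1 : ∀ i, Continuous (fun t => (γ t).1 0 - lam i * (γ t).1 1) := fun i =>
    (c 0).sub (continuous_const.mul (c 1))
  have c2 : ∀ i, Continuous (fun t => (γ t).1 0 - mu i * (γ t).1 2) := fun i =>
    (c 0).sub (continuous_const.mul (c 2))
  rw [← wind_prod _ (fun i t => (γ t).1 0 - lam i * (γ t).1 1) c1 (fun i t => MF_ne1 _ _),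
    ← wind_prod _ (fun i t => (γ t).1 0 - mu i * (γ t).1 2) c2 (fun i t => MF_ne2 _ _),
    ← wind_mul _ _ (continuous_finsetProd _ fun i _ => c1 i) (continuous_finsetProd _ fun i _ => c2 i)
      (fun t => Finset.prod_ne_zero_iff.2 fun i _ => MF_ne1 _ _)
      (fun t => Finset.prod_ne_zero_iff.2 fun i _ => MF_ne2 _ _)]
  simp only [(γ _).2]
  exact wind_const 1 one_ne_zero

/-- if all but at most one of the numbers equal the average, all of them do -/
theorem all_avg {ι : Type} [Fintype ι] [DecidableEq ι] (c : ι → ℂ) (Z : ι → Prop)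
    (hZ : ∀ i j, Z i → Z j → i = j) (h : ∀ i, ¬ Z i → (Fintype.card ι : ℂ) * c i = ∑ k, c k) (i : ι) :
    (Fintype.card ι : ℂ) * c i = ∑ k, c k := by
  by_cases hi : Z i
  · have h1 : ∑ k, ((Fintype.card ι : ℂ) * c k - ∑ k, c k) = 0 := by
      rw [Finset.sum_sub_distrib, ← Finset.mul_sum, Finset.sum_const, Finset.card_univ, nsmul_eq_mul,
        sub_self]
    rw [Finset.sum_eq_single i (fun k _ hk => by
      rw [h k (fun hk' => hk (hZ _ _ hk' hi)), sub_self]) (by simp)] at h1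
    exact sub_eq_zero.1 h1
  · exact h i hi

end relations

/-- windings of the linear forms -/
noncomputable def formWind {p q : ℕ} (lam : Fin p → ℂ) (mu : Fin q → ℂ) :
    Fin p ⊕ Fin q → C(I, MilnorFibre p q lam mu) → ℂ :=
  Sum.elim (fun i γ => wind (fun t => (γ t).1 0 - lam i * (γ t).1 1))
    (fun j γ => wind (fun t => (γ t).1 0 - mu j * (γ t).1 2))

theorem exists_ne_zero {r : ℕ} (hr : 2 ≤ r) (g : Fin r → ℂ) (hg : Function.Injective g) :
    ∃ i, g i ≠ 0 := by
  by_contra h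
  push Not at h
  have := hg ((h ⟨0, by omega⟩).trans (h ⟨1, by omega⟩).symm)
  simp at this

theorem statement1 (p q : ℕ) (hq : 2 ≤ q) (hqp : q ≤ p) (n : ℕ) (hn : n = p + q)
    (lam : Fin p → ℂ) (mu : Fin q → ℂ)
    (hlam : Function.Injective lam) (hmu : Function.Injective mu)
    -- at most one of the `λᵢ, μⱼ` is zero
    (h0 : ∀ (i : Fin p) (j : Fin q), lam i ≠ 0 ∨ mu j ≠ 0) :
    Module.finrank ℂ (H1.obj (TopCat.of (MilnorFibre p q lam mu))) = n - 1 := by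
  subst hn
  have hl := exists_ne_zero (hq.trans hqp) lam hlam
  have hm := exists_ne_zero hq mu hmu
  have hpi : (2 * Real.pi * Complex.I : ℂ) ≠ 0 := Complex.two_pi_I_ne_zero
  have : Nonempty (Fin p ⊕ Fin q) := ⟨Sum.inl hl.choose⟩
  have hcard : Fintype.card (Fin p ⊕ Fin q) = p + q := by simp
  rw [finrank_H1 (MilnorFibre p q lam mu) (formWind lam mu), hcard]
  · rintro (i | j)
    · exact wind_cocycle (fun x : MilnorFibre p q lam mu => x.1 0 - lam i * x.1 1)
        ((MF_cont 0).sub (continuous_const.mul (MF_cont 1))) (fun x => MF_ne1 x i)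
    · exact wind_cocycle (fun x : MilnorFibre p q lam mu => x.1 0 - mu j * x.1 2)
        ((MF_cont 0).sub (continuous_const.mul (MF_cont 2))) (fun x => MF_ne2 x j)
  · intro φ hφ
    obtain ⟨a, b, H⟩ := span_all hlam hmu hl hm hφ
    refine ⟨Sum.elim a b, fun γ hγ => ?_⟩
    rw [Fintype.sum_sum_type]
    exact H γ hγ
  · intro c
    constructor
    · intro hc
      have hn0 : ((p + q : ℕ) : ℂ) ≠ 0 := Nat.cast_ne_zero.2 (by omega)
      have key := all_avg c (fun k => Sum.elim lam mu k = 0) (by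
          rintro (i | i) (j | j) hi hj
          · exact congrArg _ (hlam (hi.trans hj.symm))
          · exact ((h0 i j).elim (fun h => h hi) (fun h => h hj)).elim
          · exact ((h0 j i).elim (fun h => h hj) (fun h => h hi)).elim
          · exact congrArg _ (hmu (hi.trans hj.symm))) (by
          rw [hcard]
          rintro (i | i) hi
          · obtain ⟨γ, g, g1, g2⟩ := exists_loop hlam hmu hm i hi
            have := hc γ g
            rw [Fintype.sum_sum_type] at this ⊢
            simp only [formWind, Sum.elim_inl, Sum.elim_inr, g1, g2] at this
            apply mul_right_cancel₀ hpi
            rw [← sub_eq_zero, ← this]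
            simp only [Nat.cast_ite, Nat.cast_zero, sub_mul, mul_sub, Finset.sum_sub_distrib, ite_mul, mul_ite, zero_mul, mul_zero, mul_neg,
              Finset.sum_neg_distrib, Finset.sum_ite_eq', Finset.mem_univ, if_true, ← Finset.sum_mul]
            ring
          · obtain ⟨γ, g, g1, g2⟩ := exists_loop2 hlam hmu hl i hi
            have := hc γ g
            rw [Fintype.sum_sum_type] at this ⊢
            simp only [formWind, Sum.elim_inl, Sum.elim_inr, g1, g2] at this
            apply mul_right_cancel₀ hpi
            rw [← sub_eq_zero, ← this]
            simp only [Nat.cast_ite, Nat.cast_zero, sub_mul, mul_sub, Finset.sum_sub_distrib, ite_mul, mul_ite, zero_mul, mul_zero, mul_neg,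
              Finset.sum_neg_distrib, Finset.sum_ite_eq', Finset.mem_univ, if_true, ← Finset.sum_mul]
            ring)
      rw [hcard] at key
      refine ⟨(∑ k, c k) / (p + q : ℕ), fun i => ?_⟩
      rw [eq_div_iff hn0, mul_comm]
      exact key i
    · rintro ⟨a, ha⟩ γ -
      simp only [ha, ← Finset.mul_sum]
      rw [Fintype.sum_sum_type]
      simp only [formWind, Sum.elim_inl, Sum.elim_inr]
      rw [sum_wind γ, mul_zero]
end

section
/- Let 𝒜 be a line arrangement and P₁ ≠ P₂ two points of ℙ²(ℂ) such that every line of 𝒜 contains P₁ or P₂. Assume moreover that some line of 𝒜 contains P₁ but not P₂, and some line of 𝒜 contains P₂ but not P₁. Then 𝒜 admits no weak (k,d)-multinet. -/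
/-- The complex projective plane. -/
abbrev PP2 : Type := Projectivization ℂ (Fin 3 → ℂ)

/-- A line in `ℙ²(ℂ)` is (the projectivization of) a 2-dimensional linear
subspace of `ℂ³`. -/
def IsProjLine (W : Submodule ℂ (Fin 3 → ℂ)) : Prop :=
  Module.finrank ℂ W = 2

/-- A point of `ℙ²(ℂ)` lies on the line given by the subspace `W`. -/
def OnLine (P : PP2) (W : Submodule ℂ (Fin 3 → ℂ)) : Prop :=
  P.submodule ≤ W

/-- A weak `(k,d)`-multinet on the line arrangement `𝒜`, with class-assignment
function `cls`, multiplicity function `m` and base locus `X`. -/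
structure IsWeakMultinet (𝒜 : Finset (Submodule ℂ (Fin 3 → ℂ))) (k d : ℕ)
    (cls : Submodule ℂ (Fin 3 → ℂ) → Fin k) (m : Submodule ℂ (Fin 3 → ℂ) → ℕ)
    (X : Set PP2) : Prop where
  k_ge : 3 ≤ k
  d_ge : 1 ≤ d
  m_pos : ∀ W ∈ 𝒜, 1 ≤ m W
  /-- every point of the base locus lies on at least two lines of `𝒜` -/
  X_mult : ∀ P ∈ X, ∃ W ∈ 𝒜, ∃ W' ∈ 𝒜, W ≠ W' ∧ OnLine P W ∧ OnLine P W'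
  /-- (i): each class has total multiplicity `d` -/
  sum_classes : ∀ i : Fin k,
    ∑ᶠ W ∈ {W ∈ (↑𝒜 : Set (Submodule ℂ (Fin 3 → ℂ))) | cls W = i}, m W = d
  /-- (ii): lines from different classes meet inside the base locus -/
  inter_mem : ∀ W ∈ 𝒜, ∀ W' ∈ 𝒜, cls W ≠ cls W' →
    ∀ P : PP2, OnLine P W → OnLine P W' → P ∈ X
  /-- (iii): for `p ∈ X` the number `n_p` does not depend on the class -/
  sum_point : ∀ P ∈ X, ∀ i j : Fin k,
    ∑ᶠ W ∈ {W ∈ (↑𝒜 : Set (Submodule ℂ (Fin 3 → ℂ))) | cls W = i ∧ OnLine P W}, m W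
      = ∑ᶠ W ∈ {W ∈ (↑𝒜 : Set (Submodule ℂ (Fin 3 → ℂ))) | cls W = j ∧ OnLine P W}, m W

lemma line_unique {P Q : PP2} (hPQ : P ≠ Q) {W W' : Submodule ℂ (Fin 3 → ℂ)}
    (hW : IsProjLine W) (hW' : IsProjLine W') (h1 : OnLine P W) (h2 : OnLine Q W)
    (h3 : OnLine P W') (h4 : OnLine Q W') : W = W' := by
  by_contra hne
  unfold IsProjLine at hW hW'
  have hlt : W ⊓ W' < W := by
    refine lt_of_le_of_ne inf_le_left fun h => hne ?_
    exact Submodule.eq_of_le_of_finrank_eq (inf_eq_left.mp h) (by omega)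
  have h5 := Submodule.finrank_lt_finrank_of_lt hlt
  have key : ∀ R : PP2, OnLine R W → OnLine R W' → R.submodule = W ⊓ W' := by
    intro R ha hb
    refine Submodule.eq_of_le_of_finrank_le (le_inf ha hb) ?_
    rw [R.finrank_submodule]; omega
  exact hPQ (Projectivization.submodule_injective ((key P h1 h3).trans (key Q h2 h4).symm))

lemma lines_meet {W W' : Submodule ℂ (Fin 3 → ℂ)}
    (hW : IsProjLine W) (hW' : IsProjLine W') : ∃ P : PP2, OnLine P W ∧ OnLine P W' := by
  unfold IsProjLine at hW hW'
  have h := Submodule.finrank_sup_add_finrank_inf_eq W W'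
  have h' := Submodule.finrank_le (W ⊔ W')
  simp only [Module.finrank_fin_fun] at h'
  have hb : W ⊓ W' ≠ ⊥ := by
    intro hb
    rw [hb, finrank_bot] at h
    omega
  obtain ⟨v, hv, hv0⟩ := Submodule.exists_mem_ne_zero_of_ne_bot hb
  refine ⟨Projectivization.mk ℂ v hv0, ?_, ?_⟩ <;>
    simp only [OnLine, Projectivization.submodule_mk, Submodule.span_singleton_le_iff_mem]
  exacts [hv.1, hv.2]

lemma exists_of_sum {m : Submodule ℂ (Fin 3 → ℂ) → ℕ}
    {S : Set (Submodule ℂ (Fin 3 → ℂ))} (h : ∑ᶠ W ∈ S, m W ≠ 0) : ∃ W, W ∈ S := by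
  by_contra! hn
  exact h (by simp [hn])

lemma sum_ne_zero_of {𝒜 : Finset (Submodule ℂ (Fin 3 → ℂ))} {m : Submodule ℂ (Fin 3 → ℂ) → ℕ}
    {S : Set (Submodule ℂ (Fin 3 → ℂ))} (hS : S ⊆ ↑𝒜) {W : Submodule ℂ (Fin 3 → ℂ)}
    (hW : W ∈ S) (hm : 1 ≤ m W) : ∑ᶠ W ∈ S, m W ≠ 0 := by
  have hf : S.Finite := 𝒜.finite_toSet.subset hS
  rw [finsum_mem_eq_finite_toFinset_sum _ hf]
  intro h
  have := Finset.sum_eq_zero_iff.mp h W (by simpa using hW)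
  omega

theorem statement2 (P₁ P₂ : PP2) (hP : P₁ ≠ P₂)
    (𝒜 : Finset (Submodule ℂ (Fin 3 → ℂ))) (h𝒜 : ∀ W ∈ 𝒜, IsProjLine W)
    (hthrough : ∀ W ∈ 𝒜, OnLine P₁ W ∨ OnLine P₂ W)
    (h₁ : ∃ W ∈ 𝒜, OnLine P₁ W ∧ ¬ OnLine P₂ W)
    (h₂ : ∃ W ∈ 𝒜, OnLine P₂ W ∧ ¬ OnLine P₁ W) :
    ¬ ∃ (k d : ℕ) (cls : Submodule ℂ (Fin 3 → ℂ) → Fin k)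
        (m : Submodule ℂ (Fin 3 → ℂ) → ℕ) (X : Set PP2),
        IsWeakMultinet 𝒜 k d cls m X := by
  rintro ⟨k, d, cls, m, X, H⟩
  have hk := H.k_ge
  have third : ∀ i j : Fin k, ∃ l : Fin k, l ≠ i ∧ l ≠ j := by
    intro i j
    have hc : ({i, j} : Finset (Fin k)).card < (Finset.univ : Finset (Fin k)).card := by
      have := Finset.card_le_two (a := i) (b := j)
      simp only [Finset.card_univ, Fintype.card_fin]
      omega
    obtain ⟨l, -, hl⟩ := Finset.exists_mem_notMem_of_card_lt_card hc
    exact ⟨l, by simpa using hl⟩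
  have same : ∀ a ∈ 𝒜, OnLine P₁ a → ¬ OnLine P₂ a → ∀ b ∈ 𝒜, OnLine P₂ b → ¬ OnLine P₁ b →
      cls a = cls b := by
    intro a ha ha1 ha2 b hb hb2 hb1
    by_contra hne
    obtain ⟨P, hPa, hPb⟩ := lines_meet (h𝒜 a ha) (h𝒜 b hb)
    have hPX := H.inter_mem a ha b hb hne P hPa hPb
    obtain ⟨l, hl1, hl2⟩ := third (cls a) (cls b)
    have hs := sum_ne_zero_of (𝒜 := 𝒜) (m := m)
      (S := {W ∈ (↑𝒜 : Set (Submodule ℂ (Fin 3 → ℂ))) | cls W = cls a ∧ OnLine P W})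
      (fun W hW => hW.1) (W := a) ⟨ha, rfl, hPa⟩ (H.m_pos a ha)
    rw [H.sum_point P hPX (cls a) l] at hs
    obtain ⟨W, hW, hWl, hPW⟩ := exists_of_sum hs
    have hP1 : P ≠ P₁ := by rintro rfl; exact hb1 hPb
    have hP2 : P ≠ P₂ := by rintro rfl; exact ha2 hPa
    rcases hthrough W hW with h | h
    · have := line_unique hP1 (h𝒜 W hW) (h𝒜 a ha) hPW h hPa ha1
      subst this
      exact hl1 hWl.symm
    · have := line_unique hP2 (h𝒜 W hW) (h𝒜 b hb) hPW h hPb hb2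
      subst this
      exact hl2 hWl.symm
  obtain ⟨a, ha, ha1, ha2⟩ := h₁
  obtain ⟨b, hb, hb2, hb1⟩ := h₂
  have hab := same a ha ha1 ha2 b hb hb2 hb1
  have hcls : ∀ W ∈ 𝒜, cls W ≠ cls a → OnLine P₁ W ∧ OnLine P₂ W := by
    intro W hW hne
    by_cases h1 : OnLine P₁ W <;> by_cases h2 : OnLine P₂ W
    · exact ⟨h1, h2⟩
    · exact absurd ((same W hW h1 h2 b hb hb2 hb1).trans hab.symm) hne
    · exact absurd (same a ha ha1 ha2 W hW h2 h1).symm hne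
    · exact absurd (hthrough W hW) (by tauto)
  have hex : ∀ i : Fin k, ∃ W ∈ 𝒜, cls W = i := by
    intro i
    have hd := H.d_ge
    obtain ⟨W, hW, hi⟩ := exists_of_sum (m := m)
      (S := {W ∈ (↑𝒜 : Set (Submodule ℂ (Fin 3 → ℂ))) | cls W = i})
      (by rw [H.sum_classes i]; omega)
    exact ⟨W, hW, hi⟩
  obtain ⟨i, hi, -⟩ := third (cls a) (cls a)
  obtain ⟨j, hj, hji⟩ := third (cls a) i
  obtain ⟨U, hU, rfl⟩ := hex i
  obtain ⟨V, hV, rfl⟩ := hex j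
  obtain ⟨hU1, hU2⟩ := hcls U hU hi
  obtain ⟨hV1, hV2⟩ := hcls V hV hj
  exact hji (congrArg cls (line_unique hP (h𝒜 V hV) (h𝒜 U hU) hV1 hV2 hU1 hU2))
end

section
/- Let p ≥ 2 and q ≥ 1 be integers, n = p + q, c ∈ ℂ with c ≠ 0, and μ₁,…,μ_q ∈ ℂ pairwise distinct. Let f = yⁿ + zⁿ − c·x₀^p·∏_{j=1}^q (x₀ − μⱼx₂) ∈ ℂ[y,z,x₀,x₂]. Then the set of points v ∈ ℂ⁴ at which all four partial derivatives ∂f/∂y, ∂f/∂z, ∂f/∂x₀, ∂f/∂x₂ vanish is exactly {(0,0,0,t) : t ∈ ℂ}. In particular, the projective surface in ℙ³ defined by f is singular only at the point (0:0:0:1). -/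
open MvPolynomial

lemma aux_pderiv_prod {q : ℕ} (mu : Fin q → ℂ) (v : Fin 4 → ℂ) (i : Fin 4) (s : Finset (Fin q)) :
    eval v (pderiv i (∏ j ∈ s, (X 2 - C (mu j) * X 3 : MvPolynomial (Fin 4) ℂ))) =
      ∑ j ∈ s, eval v (pderiv i (X 2 - C (mu j) * X 3 : MvPolynomial (Fin 4) ℂ)) *
        ∏ k ∈ s.erase j, (v 2 - mu k * v 3) := by
  classical
  induction s using Finset.induction_on with
  | empty => simp
  | insert a s ha ih =>
    rw [Finset.prod_insert ha, Finset.sum_insert ha, Finset.erase_insert ha, Derivation.leibniz]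
    simp only [smul_eq_mul, map_add, map_mul, ih]
    have h : ∀ j ∈ s, ∏ k ∈ (insert a s).erase j, (v 2 - mu k * v 3) =
        (v 2 - mu a * v 3) * ∏ k ∈ s.erase j, (v 2 - mu k * v 3) := by
      intro j hj
      have hja : a ≠ j := by rintro rfl; exact ha hj
      rw [Finset.erase_insert_of_ne hja, Finset.prod_insert]
      simp [ha]
    rw [add_comm, Finset.mul_sum]
    congr 1
    · simp only [map_prod, map_sub, map_mul, eval_X, eval_C]; ring
    · refine Finset.sum_congr rfl fun j hj => ?_
      rw [h j hj]
      simp only [map_sub, map_mul, eval_X, eval_C]; ring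

lemma aux_main (p q : ℕ) (hp : 2 ≤ p) (n : ℕ) (hn : n = p + q)
    (c : ℂ) (hc : c ≠ 0) (mu : Fin q → ℂ) (hmu : Function.Injective mu)
    (f : MvPolynomial (Fin 4) ℂ)
    (hf : f = X 0 ^ n + X 1 ^ n - C c * X 2 ^ p * ∏ j, (X 2 - C (mu j) * X 3))
    (v : Fin 4 → ℂ) :
    (∀ i : Fin 4, eval v (pderiv i f) = 0) ↔ v 0 = 0 ∧ v 1 = 0 ∧ v 2 = 0 := by
  classical
  set Q : Fin q → ℂ := fun j => ∏ k ∈ Finset.univ.erase j, (v 2 - mu k * v 3) with hQ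
  set P : ℂ := ∏ k, (v 2 - mu k * v 3) with hP
  have hn0 : (n : ℂ) ≠ 0 := by exact_mod_cast (by omega : n ≠ 0)
  have hn1 : n - 1 ≠ 0 := by omega
  have hp1 : p - 1 ≠ 0 := by omega
  have hp0 : p ≠ 0 := by omega
  have hPQ : ∀ j, (v 2 - mu j * v 3) * Q j = P := fun j =>
    Finset.mul_prod_erase Finset.univ (fun k => v 2 - mu k * v 3) (Finset.mem_univ j)
  have e0 : eval v (pderiv 0 f) = n * v 0 ^ (n - 1) := by
    rw [hf]
    simp [Derivation.leibniz_pow, aux_pderiv_prod, pderiv_X]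
  have e1 : eval v (pderiv 1 f) = n * v 1 ^ (n - 1) := by
    rw [hf]
    simp [Derivation.leibniz_pow, aux_pderiv_prod, pderiv_X]
  have e2 : eval v (pderiv 2 f) = - (c * (p * v 2 ^ (p - 1) * P + v 2 ^ p * ∑ j, Q j)) := by
    rw [hf]
    simp [Derivation.leibniz_pow, aux_pderiv_prod, pderiv_X, eval_prod, ← hP, hQ]
    ring
  have e3 : eval v (pderiv 3 f) = c * (v 2 ^ p * ∑ j, mu j * Q j) := by
    rw [hf]
    simp [Derivation.leibniz_pow, aux_pderiv_prod, pderiv_X, eval_prod, ← hP, hQ]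
    ring
  constructor
  · intro h
    have h0 := h 0
    have h1 := h 1
    have h2 := h 2
    have h3 := h 3
    rw [e0] at h0
    rw [e1] at h1
    rw [e2] at h2
    rw [e3] at h3
    refine ⟨by simpa [hn0, hn1] using h0, by simpa [hn0, hn1] using h1, ?_⟩
    by_contra hx
    have h3' : ∑ j, mu j * Q j = 0 := by simpa [hc, hx] using h3
    have h2' : p * v 2 ^ (p - 1) * P + v 2 ^ p * ∑ j, Q j = 0 := by simpa [hc] using h2
    have euler : v 2 * ∑ j, Q j = q * P := by
      have : ∑ j, (v 2 - mu j * v 3) * Q j = q * P := by simp [hPQ]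
      rw [← this]
      have h4 : ∑ j, (v 2 - mu j * v 3) * Q j = v 2 * ∑ j, Q j - v 3 * ∑ j, mu j * Q j := by
        rw [Finset.mul_sum, Finset.mul_sum, ← Finset.sum_sub_distrib]
        exact Finset.sum_congr rfl fun j _ => by ring
      rw [h4, h3']; ring
    have hpow : v 2 ^ p = v 2 ^ (p - 1) * v 2 := (pow_sub_one_mul hp0 _).symm
    have hP0 : P = 0 := by
      have : (n : ℂ) * (v 2 ^ (p - 1) * P) = 0 := by
        rw [hn, ← h2', hpow, mul_assoc (v 2 ^ (p-1)) (v 2), euler]; push_cast; ring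
      simpa [hn0, hx] using this
    have hS0 : ∑ j, Q j = 0 := by simpa [hP0, hx] using euler
    obtain ⟨a, -, ha⟩ := Finset.prod_eq_zero_iff.1 (hP ▸ hP0)
    have hQa : Q a = 0 := by
      rw [← hS0]
      symm
      refine Finset.sum_eq_single a (fun b _ hb => ?_) (by simp)
      exact Finset.prod_eq_zero (Finset.mem_erase.2 ⟨hb.symm, Finset.mem_univ a⟩) ha
    obtain ⟨b, hb, hb0⟩ := Finset.prod_eq_zero_iff.1 hQa
    have hx3 : v 3 ≠ 0 := by
      intro h; apply hx; simpa [h] using ha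
    apply (Finset.mem_erase.1 hb).1
    apply hmu
    apply mul_right_cancel₀ hx3
    linear_combination ha - hb0
  · rintro ⟨h0, h1, h2⟩ i
    fin_cases i
    · exact e0.trans (by simp [h0, hn1])
    · exact e1.trans (by simp [h1, hn1])
    · exact e2.trans (by simp [h2, hp1, hp0])
    · exact e3.trans (by simp [h2, hp0])

theorem statement7 (p q : ℕ) (hp : 2 ≤ p) (hq : 1 ≤ q) (n : ℕ) (hn : n = p + q)
    (c : ℂ) (hc : c ≠ 0) (mu : Fin q → ℂ) (hmu : Function.Injective mu)
    (f : MvPolynomial (Fin 4) ℂ)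
    -- variables: `X 0 = y`, `X 1 = z`, `X 2 = x₀`, `X 3 = x₂`
    (hf : f = X 0 ^ n + X 1 ^ n - C c * X 2 ^ p * ∏ j, (X 2 - C (mu j) * X 3)) :
    {v : Fin 4 → ℂ | ∀ i : Fin 4, eval v (pderiv i f) = 0}
        = {v : Fin 4 → ℂ | v 0 = 0 ∧ v 1 = 0 ∧ v 2 = 0} ∧
    ∀ (v : Fin 4 → ℂ) (hv : v ≠ 0), (∀ i : Fin 4, eval v (pderiv i f) = 0) →
      Projectivization.mk ℂ v hv
        = Projectivization.mk ℂ (fun i : Fin 4 => if i = 3 then 1 else 0)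
            (by intro h; simpa using congrFun h 3) := by
  have key := aux_main p q hp n hn c hc mu hmu f hf
  refine ⟨Set.ext key, fun v hv h => ?_⟩
  obtain ⟨h0, h1, h2⟩ := (key v).1 h
  rw [Projectivization.mk_eq_mk_iff']
  refine ⟨v 3, ?_⟩
  funext i
  fin_cases i <;> simp [h0, h1, h2]
end

section
/- Let n ≥ 2 and let ℓ₁,…,ℓ_n : ℂ³ → ℂ be nonzero linear forms that are pairwise non-proportional, and set f = ∏_{i=1}^n ℓᵢ ∈ ℂ[x₀,x₁,x₂]. Consider F = yⁿ + zⁿ − f(x₀,x₁,x₂) ∈ ℂ[y,z,x₀,x₁,x₂]. Then the set of points w ∈ ℂ⁵ at which all five partial derivatives of F vanish is exactly {(0,0,v) : v ∈ ℂ³ and at least two of the linear forms ℓ₁,…,ℓ_n vanish at v}. In particular, the singular locus of the projective threefold {F = 0} ⊂ ℙ⁴ consists of the points (0:0:a:b:c) such that (a:b:c) is a point of multiplicity at least two of the line arrangement defined by f. -/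
open MvPolynomial

theorem aux_prod {n : ℕ} (k : Fin 5) (w : Fin 5 → ℂ) (L : Fin n → MvPolynomial (Fin 5) ℂ)
    (s : Finset (Fin n)) :
    eval w (pderiv k (∏ i ∈ s, L i)) =
      ∑ i ∈ s, (∏ j ∈ s.erase i, eval w (L j)) * eval w (pderiv k (L i)) := by
  induction s using Finset.induction_on with
  | empty => simp
  | insert b s hb ih =>
    rw [Finset.prod_insert hb, Derivation.leibniz, Finset.sum_insert hb,
      Finset.erase_insert hb]
    simp only [smul_eq_mul, map_add, map_mul, ih, map_prod]
    rw [add_comm, Finset.mul_sum]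
    congr 1
    apply Finset.sum_congr rfl
    intro i hi
    have hbi : b ≠ i := fun h => hb (h ▸ hi)
    rw [Finset.erase_insert_of_ne hbi, Finset.prod_insert (by simp [hb]), mul_assoc]

theorem aux_lin (k : Fin 3) (b : Fin 3 → ℂ) (w : Fin 5 → ℂ) :
    eval w (pderiv (k.succ.succ : Fin 5)
      (∑ t : Fin 3, C (b t) * X (t.succ.succ : Fin 5))) = b k := by
  simp only [map_sum, Derivation.leibniz, pderiv_C, pderiv_X, smul_zero, add_zero, smul_eq_mul,
    map_mul, eval_C, Pi.single_apply, Fin.succ_inj]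
  simp [apply_ite (eval w)]

theorem aux_lin' (k : Fin 5) (hk : k = 0 ∨ k = 1) (b : Fin 3 → ℂ) :
    (pderiv k (∑ t : Fin 3, C (b t) * X (t.succ.succ : Fin 5))) = 0 := by
  simp only [map_sum, Derivation.leibniz, pderiv_C, pderiv_X, smul_zero, add_zero, smul_eq_mul]
  apply Finset.sum_eq_zero
  intro t _
  rw [Pi.single_apply, if_neg, mul_zero, mul_zero, add_zero]
  rcases hk with rfl | rfl <;> fin_cases t <;> decide

theorem statement8 (n : ℕ) (hn : 2 ≤ n)
    -- the linear form `ℓᵢ` on `ℂ³` is `v ↦ ∑ t, a i t * v t`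
    (a : Fin n → Fin 3 → ℂ) (ha : ∀ i, a i ≠ 0)
    (hprop : ∀ i j, i ≠ j → ∀ c : ℂ, a j ≠ c • a i)
    (F : MvPolynomial (Fin 5) ℂ)
    -- variables: `X 0 = y`, `X 1 = z`, `X 2 = x₀`, `X 3 = x₁`, `X 4 = x₂`
    (hF : F = X 0 ^ n + X 1 ^ n
        - ∏ i, (∑ t : Fin 3, C (a i t) * X (t.succ.succ : Fin 5))) :
    {w : Fin 5 → ℂ | ∀ i : Fin 5, eval w (pderiv i F) = 0}
      = {w : Fin 5 → ℂ | w 0 = 0 ∧ w 1 = 0 ∧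
          ∃ i j : Fin n, i ≠ j ∧ (∑ t : Fin 3, a i t * w (t.succ.succ : Fin 5)) = 0 ∧
            (∑ t : Fin 3, a j t * w (t.succ.succ : Fin 5)) = 0} := by
  ext w
  simp only [Set.mem_setOf_eq]
  have hn0 : (n : ℂ) ≠ 0 := by exact_mod_cast (by omega : n ≠ 0)
  have hn1 : n - 1 ≠ 0 := by omega
  set l : Fin n → ℂ := fun i => ∑ t : Fin 3, a i t * w (t.succ.succ : Fin 5) with hl
  have e0 : eval w (pderiv 0 F) = n * w 0 ^ (n - 1) := by
    rw [hF, map_sub, map_sub, aux_prod]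
    simp [aux_lin' 0 (Or.inl rfl), pderiv_pow, pderiv_X]
  have e1 : eval w (pderiv 1 F) = n * w 1 ^ (n - 1) := by
    rw [hF, map_sub, map_sub, aux_prod]
    simp [aux_lin' 1 (Or.inr rfl), pderiv_pow, pderiv_X]
  have ek : ∀ k : Fin 3, eval w (pderiv (k.succ.succ : Fin 5) F) =
      - ∑ i, (∏ j ∈ Finset.univ.erase i, l j) * a i k := by
    intro k
    have h1 : (k.succ.succ : Fin 5) ≠ 0 := by fin_cases k <;> decide
    have h2 : (k.succ.succ : Fin 5) ≠ 1 := by fin_cases k <;> decide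
    rw [hF, map_sub, map_sub, aux_prod]
    simp only [aux_lin]
    have : ∀ j, eval w (∑ t : Fin 3, C (a j t) * X (t.succ.succ : Fin 5)) = l j := by
      intro j; simp only [map_sum, map_mul, eval_C, eval_X, hl]
    simp only [this, map_add, pderiv_pow, pderiv_X_of_ne h1.symm, pderiv_X_of_ne h2.symm,
      mul_zero, map_zero, add_zero, zero_sub]
  change _ ↔ w 0 = 0 ∧ w 1 = 0 ∧ ∃ i j : Fin n, i ≠ j ∧ l i = 0 ∧ l j = 0
  constructor
  · intro h
    have h0 := h 0
    have h1 := h 1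
    rw [e0] at h0
    rw [e1] at h1
    have hk : ∀ k : Fin 3, ∑ i, (∏ j ∈ Finset.univ.erase i, l j) * a i k = 0 := fun k => by
      have := h k.succ.succ
      rwa [ek, neg_eq_zero] at this
    refine ⟨by simpa [hn0, hn1] using h0, by simpa [hn0, hn1] using h1, ?_⟩
    have euler : (n : ℂ) * ∏ j, l j = 0 := by
      calc (n : ℂ) * ∏ j, l j = ∑ i : Fin n, (∏ j ∈ Finset.univ.erase i, l j) * l i := by
            simp [Finset.prod_erase_mul]
        _ = ∑ k : Fin 3, (∑ i, (∏ j ∈ Finset.univ.erase i, l j) * a i k) * w k.succ.succ := by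
            simp only [Finset.sum_mul]
            rw [Finset.sum_comm]
            refine Finset.sum_congr rfl fun i _ => ?_
            simp only [hl, Finset.mul_sum, mul_assoc]
        _ = 0 := by simp [hk]
    obtain ⟨i, -, hi⟩ := Finset.prod_eq_zero_iff.1 ((mul_eq_zero.1 euler).resolve_left hn0)
    obtain ⟨k, hik⟩ := Function.ne_iff.1 (ha i)
    have h2 := hk k
    rw [Finset.sum_eq_single i] at h2
    · obtain ⟨j, hj, hj0⟩ := Finset.prod_eq_zero_iff.1 ((mul_eq_zero.1 h2).resolve_right hik)
      exact ⟨i, j, (Finset.ne_of_mem_erase hj).symm, hi, hj0⟩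
    · intro b _ hb
      rw [Finset.prod_eq_zero (i := i) (by simp [hb.symm]) hi, zero_mul]
    · simp
  · rintro ⟨h0, h1, i, j, hij, hi, hj⟩
    have hk : ∀ k : Fin 3, eval w (pderiv (k.succ.succ : Fin 5) F) = 0 := by
      intro k
      rw [ek, neg_eq_zero]
      refine Finset.sum_eq_zero fun b _ => ?_
      by_cases hb : b = i
      · rw [Finset.prod_eq_zero (i := j) (by simp [hb, hij.symm]) hj, zero_mul]
      · rw [Finset.prod_eq_zero (i := i) (by simp [Ne.symm hb]) hi, zero_mul]
    intro m
    refine Fin.cases ?_ (fun m => Fin.cases ?_ (fun k => hk k) m) m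
    · rw [e0, h0, zero_pow hn1, mul_zero]
    · change eval w (pderiv 1 F) = 0
      rw [e1, h1, zero_pow hn1, mul_zero]
end
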